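/- arXiv:1701.02709 — 2 statements merged into one kernel-verified Lean document; each statement's English description precedes it below -/
import Mathlib

section
/- Let L be a positive definite moment functional on real polynomials in d variables, let {ℙ_n} be vectors of polynomials forming degree-wise bases of the spaces of orthogonal polynomials with respect to L, and let A_{n,i}, B_{n,i}, C_{n,i} be the coefficient matrices of the three-term relation x_i ℙ_n = A_{n,i} ℙ_{n+1} + B_{n,i} ℙ_n + C_{n,i} ℙ_{n−1}. Then for every n ∈ ℕ and 1 ≤ i ≤ d: rank A_{n,i} = r_n^d and rank C_{n+1,i} = r_n^d; moreover, the stacked matrix A_n = (A_{n,1}ᵀ, …, A_{n,d}ᵀ)ᵀ of size d·r_n^d × r_{n+1}^d has rank r_{n+1}^d, and the stacked matrix C_{n+1}ᵀ = (C_{n+1,1}, …, C_{n+1,d})ᵀ of size d·r_n^d × r_{n+1}^d has rank r_{n+1}^d. -/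
open MvPolynomial Matrix MeasureTheory

noncomputable section

/-- Real polynomials in `d` variables. -/
abbrev MPoly (d : ℕ) : Type := MvPolynomial (Fin d) ℝ

/-- Multi-indices `α ∈ ℕ^d` of total degree `n`; there are `r_n^d = binom (n+d-1) n` of them. -/
abbrev Idx (d n : ℕ) : Type := {α : Fin d → ℕ // ∑ i, α i = n}

instance (d n : ℕ) : Fintype (Idx d n) :=
  Fintype.subtype (Finset.Nat.antidiagonalTuple d n)
    (fun _ => Finset.Nat.mem_antidiagonalTuple)

/-- The monomial `x^α`. -/
def mono {d : ℕ} (α : Fin d → ℕ) : MPoly d :=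
  MvPolynomial.monomial (Finsupp.equivFunOnFinite.symm α) 1

/-- Multi-indices `α ∈ ℕ^d` of total degree at most `n`. -/
abbrev IdxLe (d n : ℕ) : Type := {α : Fin d → ℕ // ∑ i, α i ≤ n}

instance (d n : ℕ) : Fintype (IdxLe d n) :=
  Fintype.subtype ((Finset.range (n+1)).biUnion fun k => Finset.Nat.antidiagonalTuple d k)
    (fun α => by
      simp only [Finset.mem_biUnion, Finset.mem_range, Finset.Nat.mem_antidiagonalTuple,
        Nat.lt_succ_iff]
      exact ⟨fun ⟨k, hk, he⟩ => he ▸ hk, fun h => ⟨_, h, rfl⟩⟩)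

/-- `P` is a polynomial of total degree strictly less than `n` (the zero polynomial belongs
to every such class). -/
def IsDegLt {d : ℕ} (P : MPoly d) (n : ℕ) : Prop := P = 0 ∨ P.totalDegree < n

/-- The family `{P m α : |α| = m ≤ n}` spans `Π_n^d`, the polynomials of total degree at
most `n`, for every `n`. -/
def SpansPi {d : ℕ} (P : ∀ n, Idx d n → MPoly d) : Prop :=
  ∀ n, Submodule.span ℝ {p | ∃ m, m ≤ n ∧ ∃ α : Idx d m, p = P m α} =
    MvPolynomial.restrictTotalDegree (Fin d) ℝ n

variable {d : ℕ}

/-!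
Let `F n α` be the homogeneous part of degree `n` of `P n α`; these leading forms are a basis of
the forms of degree `n`. The top degree of the three-term relation reads
`X i * F n α = ∑ β, A n i α β • F (n + 1) β`, so the rows of `A n i` are the coordinates of the
forms `X i * F n α`. For one `i` these are linearly independent, and for all `i` together they
span the forms of degree `n + 1`. Expanding `L (P n γ * X i * P (n + 1) α)` with either relation
gives `H_n C_{n+1,i}ᵀ = A_{n,i} H_{n+1}` with invertible Gram matrices `H_n`, which carries the
ranks over from `A` to `C`.
-/

section Matrices

variable {R m k s : Type*} [Fintype k]

lemma rank_eq_finrank_span_of_eq_sum_smul {K V : Type*} [Field K] [AddCommGroup V] [Module K V]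
    [Finite m] {b : k → V} (hb : LinearIndependent K b) {M : Matrix m k K} {w : m → V}
    (hw : ∀ j, w j = ∑ l, M j l • b l) :
    M.rank = Module.finrank K (Submodule.span K (Set.range w)) := by
  have hrange : Set.range w = Fintype.linearCombination K b '' Set.range M.row := by
    rw [← Set.range_comp]
    exact congrArg Set.range (funext hw)
  rw [hrange, ← Submodule.map_span, M.rank_eq_finrank_span_row]
  exact (Submodule.equivMapOfInjective _
    (linearIndependent_iff_injective_fintypeLinearCombination.mp hb) _).finrank_eq

/-- The block column whose blocks are the matrices `M i`, with rows indexed by pairs of a block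
and a row of that block. -/
def rowStack (M : s → Matrix m k R) : Matrix (s × m) k R :=
  of fun p l => M p.1 p.2 l

variable [CommRing R]

lemma rank_rowStack_mul_right [DecidableEq k] (M : s → Matrix m k R) {U : Matrix k k R}
    (hU : IsUnit U) : (rowStack fun i => M i * U).rank = (rowStack M).rank :=
  rank_mul_eq_left_of_isUnit_det U (rowStack M) ((isUnit_iff_isUnit_det U).mp hU)

open scoped Kronecker in
lemma rank_rowStack_mul_left [Finite s] [Fintype m] [DecidableEq m] (M : s → Matrix m k R)
    {U : Matrix m m R} (hU : IsUnit U) :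
    (rowStack fun i => U * M i).rank = (rowStack M).rank := by
  classical
  cases nonempty_fintype s
  have hblock : (rowStack fun i => U * M i) = ((1 : Matrix s s R) ⊗ₖ U) * rowStack M := by
    ext ⟨i, j⟩ l
    simp [rowStack, mul_apply, Fintype.sum_prod_type, one_apply]
  rw [hblock, rank_mul_eq_right_of_isUnit_det]
  exact (isUnit_iff_isUnit_det _).mp (isUnit_one.kronecker hU)

end Matrices

section Forms

variable {σ R : Type*} [CommSemiring R]

lemma homogeneousComponent_add_mul_of_isHomogeneous {m : ℕ} {p : MvPolynomial σ R}
    (hp : p.IsHomogeneous m) (n : ℕ) (q : MvPolynomial σ R) :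
    homogeneousComponent (m + n) (p * q) = p * homogeneousComponent n q := by
  let _ : GradedAlgebra (homogeneousSubmodule σ R) := gradedAlgebra
  have hdecompose (r : MvPolynomial σ R) (k : ℕ) :
      (DirectSum.decompose (homogeneousSubmodule σ R) r k : MvPolynomial σ R) =
        homogeneousComponent k r := decomposition.decompose'_apply r k
  rw [← hdecompose, ← hdecompose]
  exact DirectSum.coe_decompose_mul_add_of_left_mem _ hp

lemma homogeneousComponent_map_restrictTotalDegree (n : ℕ) :
    (restrictTotalDegree σ R n).map (homogeneousComponent n) = homogeneousSubmodule σ R n := by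
  refine le_antisymm ?_ fun p hp => ?_
  · rintro _ ⟨p, -, rfl⟩
    exact homogeneousComponent_mem ..
  · exact ⟨p, (mem_restrictTotalDegree ..).mpr hp.totalDegree_le, homogeneousComponent_eq_self hp⟩

lemma span_X_mul_eq_homogeneousSubmodule_succ {κ : Type*} {n : ℕ} {F : κ → MvPolynomial σ R}
    (hF : Submodule.span R (Set.range F) = homogeneousSubmodule σ R n) :
    Submodule.span R (Set.range fun p : σ × κ => X p.1 * F p.2) =
      homogeneousSubmodule σ R (n + 1) := by
  rw [← homogeneousSubmodule_one_pow R (n + 1), pow_succ', homogeneousSubmodule_one_pow, ← hF,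
    homogeneousSubmodule_one_eq_span_X, Submodule.span_mul_span]
  exact congrArg _ (Set.image2_range _ _ _).symm

lemma finrank_homogeneousSubmodule (σ R : Type*) [CommRing R] [Nontrivial R] (n : ℕ) :
    Module.finrank R (homogeneousSubmodule σ R n) = Nat.card {m : σ →₀ ℕ // m.degree = n} :=
  Module.finrank_eq_nat_card_basis (Module.Basis.ofRepr
    ((LinearEquiv.ofEq _ _ (homogeneousSubmodule_eq_finsupp_supported σ R n)).trans
      (AddMonoidAlgebra.supportedEquivFinsupp _)))

end Forms

section GradedBases

variable {σ K : Type*} [Field K] {ι : ℕ → Type*}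

/-- The homogeneous part of degree `n` of `P n α`, for a family in which `P n α` has degree at
most `n`; it vanishes if the degree is smaller. -/
def leadingForm (P : ∀ n, ι n → MvPolynomial σ K) (n : ℕ) (α : ι n) : MvPolynomial σ K :=
  homogeneousComponent n (P n α)

/-- The Gram matrix `H_n = L(ℙ_n ℙ_nᵀ)`. -/
def gramMatrix (L : MvPolynomial σ K →ₗ[K] K) (P : ∀ n, ι n → MvPolynomial σ K) (n : ℕ) :
    Matrix (ι n) (ι n) K :=
  of fun α β => L (P n α * P n β)

/-- Quasi-definite moment functionals: the bilinear form `(p, q) ↦ L (p * q)` is nondegenerate on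
the polynomials of total degree at most `n`, for every `n`. -/
def IsQuasiDefinite (L : MvPolynomial σ K →ₗ[K] K) : Prop :=
  ∀ n, ∀ p ∈ restrictTotalDegree σ K n, (∀ q ∈ restrictTotalDegree σ K n, L (p * q) = 0) → p = 0

/-- Each `P n α` is orthogonal, with respect to `L`, to all polynomials of lower degree. -/
def IsOrthogonalFamily (L : MvPolynomial σ K →ₗ[K] K) (P : ∀ n, ι n → MvPolynomial σ K) : Prop :=
  ∀ n (α : ι n) (q : MvPolynomial σ K), q.totalDegree < n → L (P n α * q) = 0

variable [∀ n, Fintype (ι n)]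

/-- Degree-wise bases of the polynomial ring: for every `n` the `P m α` with `m ≤ n` span the
polynomials of total degree at most `n`, and the number of `P n α` is the dimension of the space of
forms of degree `n`. The second field encodes the linear independence of the family. -/
structure IsGradedBasis (P : ∀ n, ι n → MvPolynomial σ K) : Prop where
  span_eq : ∀ n, Submodule.span K {p | ∃ m, m ≤ n ∧ ∃ α : ι m, p = P m α} =
    restrictTotalDegree σ K n
  card_eq : ∀ n, Fintype.card (ι n) = Module.finrank K (homogeneousSubmodule σ K n)

/-- The three-term relation `x_i ℙ_n = A_{n,i} ℙ_{n+1} + B_{n,i} ℙ_n + C_{n,i} ℙ_{n-1}` with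
`ℙ_{-1} = 0`. The index of `C` is shifted: `C n i` stands for `C_{n+1,i}`. -/
structure ThreeTermRelation (P : ∀ n, ι n → MvPolynomial σ K)
    (A : ∀ n, σ → Matrix (ι n) (ι (n + 1)) K) (B : ∀ n, σ → Matrix (ι n) (ι n) K)
    (C : ∀ n, σ → Matrix (ι (n + 1)) (ι n) K) : Prop where
  zero : ∀ i (α : ι 0), X i * P 0 α =
    (∑ β, A 0 i α β • P 1 β) + ∑ β, B 0 i α β • P 0 β
  succ : ∀ n i (α : ι (n + 1)), X i * P (n + 1) α =
    (∑ β, A (n + 1) i α β • P (n + 2) β) + (∑ β, B (n + 1) i α β • P (n + 1) β) +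
      ∑ β, C n i α β • P n β

variable {P : ∀ n, ι n → MvPolynomial σ K}

namespace IsGradedBasis

lemma mem_restrictTotalDegree (hP : IsGradedBasis P) {m n : ℕ} (hmn : m ≤ n) (α : ι m) :
    P m α ∈ restrictTotalDegree σ K n :=
  hP.span_eq n ▸ Submodule.subset_span ⟨m, hmn, α, rfl⟩

lemma totalDegree_le (hP : IsGradedBasis P) {n : ℕ} (α : ι n) : (P n α).totalDegree ≤ n :=
  (MvPolynomial.mem_restrictTotalDegree ..).mp (hP.mem_restrictTotalDegree le_rfl α)

lemma span_leadingForm (hP : IsGradedBasis P) (n : ℕ) :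
    Submodule.span K (Set.range (leadingForm P n)) = homogeneousSubmodule σ K n := by
  refine le_antisymm (Submodule.span_le.mpr ?_) ?_
  · rintro _ ⟨α, rfl⟩
    exact homogeneousComponent_mem ..
  · rw [← homogeneousComponent_map_restrictTotalDegree, ← hP.span_eq n, Submodule.map_span_le]
    rintro _ ⟨m, hmn, α, rfl⟩
    rcases hmn.lt_or_eq with hlt | rfl
    · rw [homogeneousComponent_eq_zero _ _ ((hP.totalDegree_le α).trans_lt hlt)]
      exact zero_mem _
    · exact Submodule.subset_span ⟨α, rfl⟩

lemma linearIndependent_leadingForm (hP : IsGradedBasis P) (n : ℕ) :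
    LinearIndependent K (leadingForm P n) := by
  rw [linearIndependent_iff_card_eq_finrank_span, Set.finrank, hP.span_leadingForm, hP.card_eq]

lemma linearIndependent (hP : IsGradedBasis P) (n : ℕ) : LinearIndependent K (P n) :=
  LinearIndependent.of_comp (homogeneousComponent n) (hP.linearIndependent_leadingForm n)

end IsGradedBasis

variable {L : MvPolynomial σ K →ₗ[K] K}

lemma isQuasiDefinite_of_map_mul_self_ne_zero
    (hL : ∀ p : MvPolynomial σ K, p ≠ 0 → L (p * p) ≠ 0) : IsQuasiDefinite L := by
  intro n p hp hperp
  by_contra hne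
  exact hL p hne (hperp p hp)

lemma isUnit_gramMatrix {n : ℕ} [DecidableEq (ι n)] (hL : IsQuasiDefinite L) (hP : IsGradedBasis P)
    (horth : IsOrthogonalFamily L P) : IsUnit (gramMatrix L P n) := by
  rw [← mulVec_injective_iff_isUnit]
  refine (injective_iff_map_eq_zero (gramMatrix L P n).mulVecLin).mpr fun v hv => ?_
  set p := ∑ β, v β • P n β with hp
  have hp_mem : p ∈ restrictTotalDegree σ K n :=
    Submodule.sum_mem _ fun β _ => Submodule.smul_mem _ _ (hP.mem_restrictTotalDegree le_rfl β)
  have hp_orth : restrictTotalDegree σ K n ≤ LinearMap.ker (L ∘ₗ LinearMap.mulLeft K p) := by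
    rw [← hP.span_eq n, Submodule.span_le]
    rintro _ ⟨m, hmn, α, rfl⟩
    rw [SetLike.mem_coe, LinearMap.mem_ker, LinearMap.comp_apply, LinearMap.mulLeft_apply]
    rcases hmn.lt_or_eq with hlt | rfl
    · simp [hp, Finset.sum_mul, horth n _ _ ((hP.totalDegree_le α).trans_lt hlt)]
    · calc L (p * P m α) = (gramMatrix L P m *ᵥ v) α := by
            simp [hp, mul_comm, Finset.mul_sum, mulVec, dotProduct, gramMatrix]
        _ = 0 := congrFun hv α
  have hp_zero : p = 0 := hL n p hp_mem fun q hq => hp_orth hq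
  exact funext (Fintype.linearIndependent_iff.mp (hP.linearIndependent n) v hp_zero)

namespace ThreeTermRelation

variable {A : ∀ n, σ → Matrix (ι n) (ι (n + 1)) K} {B : ∀ n, σ → Matrix (ι n) (ι n) K}
  {C : ∀ n, σ → Matrix (ι (n + 1)) (ι n) K}

lemma X_mul_sub_mem_restrictTotalDegree (h : ThreeTermRelation P A B C) (hP : IsGradedBasis P)
    (n : ℕ) (i : σ) (α : ι n) :
    X i * P n α - ∑ β, A n i α β • P (n + 1) β ∈ restrictTotalDegree σ K n := by
  have hsum {m : ℕ} (hmn : m ≤ n) (c : ι m → K) :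
      ∑ β, c β • P m β ∈ restrictTotalDegree σ K n :=
    Submodule.sum_mem _ fun β _ => Submodule.smul_mem _ _ (hP.mem_restrictTotalDegree hmn β)
  cases n with
  | zero =>
    rw [h.zero, add_sub_cancel_left]
    exact hsum le_rfl _
  | succ n =>
    rw [h.succ, add_assoc, add_sub_cancel_left]
    exact add_mem (hsum le_rfl _) (hsum n.le_succ _)

lemma X_mul_leadingForm (h : ThreeTermRelation P A B C) (hP : IsGradedBasis P)
    (n : ℕ) (i : σ) (α : ι n) :
    X i * leadingForm P n α = ∑ β, A n i α β • leadingForm P (n + 1) β := by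
  have hdeg := (mem_restrictTotalDegree ..).mp (h.X_mul_sub_mem_restrictTotalDegree hP n i α)
  have htop := homogeneousComponent_eq_zero (n + 1) _ (Nat.lt_succ_of_le hdeg)
  have hX : homogeneousComponent (n + 1) (X i * P n α) = X i * leadingForm P n α := by
    rw [add_comm]
    exact homogeneousComponent_add_mul_of_isHomogeneous (isHomogeneous_X K i) n (P n α)
  rw [map_sub, sub_eq_zero, hX] at htop
  simpa only [leadingForm, map_sum, map_smul] using htop

lemma rank_A (h : ThreeTermRelation P A B C) (hP : IsGradedBasis P) (n : ℕ) (i : σ) :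
    (A n i).rank = Fintype.card (ι n) := by
  rw [rank_eq_finrank_span_of_eq_sum_smul (hP.linearIndependent_leadingForm (n + 1))
    (h.X_mul_leadingForm hP n i)]
  exact finrank_span_eq_card ((hP.linearIndependent_leadingForm n).map_injOn
    (LinearMap.mulLeft K (X i)) (mul_right_injective₀ (X_ne_zero i)).injOn)

lemma rank_rowStack_A [Finite σ] (h : ThreeTermRelation P A B C) (hP : IsGradedBasis P) (n : ℕ) :
    (rowStack (A n)).rank = Fintype.card (ι (n + 1)) := by
  rw [rank_eq_finrank_span_of_eq_sum_smul (M := rowStack (A n))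
      (hP.linearIndependent_leadingForm (n + 1)) fun p => h.X_mul_leadingForm hP n p.1 p.2,
    span_X_mul_eq_homogeneousSubmodule_succ (hP.span_leadingForm n), hP.card_eq]

lemma map_mul_X_mul_eq_sum_A (h : ThreeTermRelation P A B C) (hP : IsGradedBasis P)
    (horth : IsOrthogonalFamily L P) (n : ℕ) (i : σ) (γ : ι n) (α : ι (n + 1)) :
    L (P (n + 1) α * (X i * P n γ)) =
      ∑ β, A n i γ β * L (P (n + 1) β * P (n + 1) α) := by
  have hdeg := (mem_restrictTotalDegree ..).mp (h.X_mul_sub_mem_restrictTotalDegree hP n i γ)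
  have hzero := horth (n + 1) α _ (Nat.lt_succ_of_le hdeg)
  rw [mul_sub, map_sub, sub_eq_zero] at hzero
  rw [hzero, mul_comm]
  simp [Finset.sum_mul]

lemma map_mul_X_mul_eq_sum_C (h : ThreeTermRelation P A B C) (hP : IsGradedBasis P)
    (horth : IsOrthogonalFamily L P) (n : ℕ) (i : σ) (γ : ι n) (α : ι (n + 1)) :
    L (P n γ * (X i * P (n + 1) α)) = ∑ β, C n i α β * L (P n γ * P n β) := by
  have hlow {m : ℕ} (hnm : n < m) (β : ι m) : L (P n γ * P m β) = 0 := by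
    rw [mul_comm]
    exact horth m β _ ((hP.totalDegree_le γ).trans_lt hnm)
  simp [h.succ, mul_add, Finset.mul_sum, hlow]

lemma gramMatrix_mul_C_transpose (h : ThreeTermRelation P A B C) (hP : IsGradedBasis P)
    (horth : IsOrthogonalFamily L P) (n : ℕ) (i : σ) :
    gramMatrix L P n * (C n i)ᵀ = A n i * gramMatrix L P (n + 1) := by
  ext γ α
  calc (gramMatrix L P n * (C n i)ᵀ) γ α
      = ∑ β, C n i α β * L (P n γ * P n β) := by
        simp only [mul_apply, gramMatrix, of_apply, transpose_apply, mul_comm]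
    _ = L (P n γ * (X i * P (n + 1) α)) := (h.map_mul_X_mul_eq_sum_C hP horth n i γ α).symm
    _ = L (P (n + 1) α * (X i * P n γ)) := congrArg L (by ring)
    _ = (A n i * gramMatrix L P (n + 1)) γ α := h.map_mul_X_mul_eq_sum_A hP horth n i γ α

end ThreeTermRelation

theorem three_term_relation_coefficients_full_rank_general [Finite σ]
    {A : ∀ n, σ → Matrix (ι n) (ι (n + 1)) K} {B : ∀ n, σ → Matrix (ι n) (ι n) K}
    {C : ∀ n, σ → Matrix (ι (n + 1)) (ι n) K}
    (hL : IsQuasiDefinite L) (hP : IsGradedBasis P) (horth : IsOrthogonalFamily L P)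
    (hrel : ThreeTermRelation P A B C) :
    (∀ n i, (A n i).rank = Fintype.card (ι n)) ∧
    (∀ n i, (C n i).rank = Fintype.card (ι n)) ∧
    (∀ n, (rowStack (A n)).rank = Fintype.card (ι (n + 1))) ∧
    (∀ n, (rowStack fun i => (C n i)ᵀ).rank = Fintype.card (ι (n + 1))) := by
  classical
  have hH n := isUnit_gramMatrix (n := n) hL hP horth
  have hdet n := (isUnit_iff_isUnit_det _).mp (hH n)
  refine ⟨hrel.rank_A hP, fun n i => ?_, hrel.rank_rowStack_A hP, fun n => ?_⟩
  · rw [← rank_transpose, ← rank_mul_eq_right_of_isUnit_det _ _ (hdet n),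
      hrel.gramMatrix_mul_C_transpose hP horth, rank_mul_eq_left_of_isUnit_det _ _ (hdet (n + 1)),
      hrel.rank_A hP]
  · rw [← rank_rowStack_mul_left _ (hH n)]
    simp only [hrel.gramMatrix_mul_C_transpose hP horth]
    rw [rank_rowStack_mul_right _ (hH (n + 1)), hrel.rank_rowStack_A hP]

end GradedBases

lemma card_idx_eq_finrank_homogeneousSubmodule (n : ℕ) :
    Fintype.card (Idx d n) = Module.finrank ℝ (homogeneousSubmodule (Fin d) ℝ n) := by
  rw [finrank_homogeneousSubmodule, ← Nat.card_eq_fintype_card]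
  exact Nat.card_congr (Finsupp.equivFunOnFinite.symm.subtypeEquiv fun α => by
    rw [Finsupp.degree_eq_sum]; rfl)

/-- Rank conditions on the coefficient matrices of the three-term relation:
`rank A_{n,i} = rank C_{n+1,i} = r_n^d`, and the stacked matrices
`A_n = (A_{n,1}ᵀ,…,A_{n,d}ᵀ)ᵀ` and `C_{n+1}ᵀ = (C_{n+1,1},…,C_{n+1,d})ᵀ` have
rank `r_{n+1}^d`.  Here `Cm n i` denotes the matrix `C_{n+1,i}`, and
`r_n^d = card (Idx d n) = binom (n+d-1) n`. -/
theorem three_term_relation_coefficients_full_rank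
    (L : MPoly d →ₗ[ℝ] ℝ)
    (hL : ∀ p : MPoly d, p ≠ 0 → 0 < L (p * p))
    (P : ∀ n, Idx d n → MPoly d)
    (hdeg : ∀ n (α : Idx d n), (P n α).totalDegree = n)
    (hspan : SpansPi P)
    (horth : ∀ n (α : Idx d n) (R : MPoly d), IsDegLt R n → L (P n α * R) = 0)
    (A : ∀ n : ℕ, Fin d → Matrix (Idx d n) (Idx d (n+1)) ℝ)
    (B : ∀ n : ℕ, Fin d → Matrix (Idx d n) (Idx d n) ℝ)
    (Cm : ∀ n : ℕ, Fin d → Matrix (Idx d (n+1)) (Idx d n) ℝ)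
    (hrel0 : ∀ (i : Fin d) (α : Idx d 0), X i * P 0 α =
      (∑ β : Idx d 1, A 0 i α β • P 1 β) + ∑ β : Idx d 0, B 0 i α β • P 0 β)
    (hrel : ∀ (n : ℕ) (i : Fin d) (α : Idx d (n+1)), X i * P (n+1) α =
      (∑ β : Idx d (n+2), A (n+1) i α β • P (n+2) β) +
      (∑ β : Idx d (n+1), B (n+1) i α β • P (n+1) β) +
      ∑ β : Idx d n, Cm n i α β • P n β) :
    (∀ (n : ℕ) (i : Fin d), (A n i).rank = Fintype.card (Idx d n)) ∧
    (∀ (n : ℕ) (i : Fin d), (Cm n i).rank = Fintype.card (Idx d n)) ∧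
    (∀ n : ℕ,
      (Matrix.of fun (p : Fin d × Idx d n) (β : Idx d (n+1)) => A n p.1 p.2 β).rank =
        Fintype.card (Idx d (n+1))) ∧
    (∀ n : ℕ,
      (Matrix.of fun (p : Fin d × Idx d n) (β : Idx d (n+1)) => Cm n p.1 β p.2).rank =
        Fintype.card (Idx d (n+1))) := by
  exact three_term_relation_coefficients_full_rank_general
    (isQuasiDefinite_of_map_mul_self_ne_zero fun p hp => (hL p hp).ne')
    ⟨hspan, card_idx_eq_finrank_homogeneousSubmodule⟩
    (fun n α q hq => horth n α q (Or.inr hq)) ⟨hrel0, hrel⟩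
end
end

section
/- Let {ℙ_n}_{n=0}^∞ = {P_α^n : |α| = n, n ∈ ℕ}, with ℙ_0 = 1, be a sequence of real polynomials in d variables such that {P_α^m : |α| ≤ m ≤ n} spans Π_n^d for each n. Then the following are equivalent: (1) there exists a determinate measure μ ∈ M(ℝ^d) with compact support such that ∫ P_α^n P_β^m dμ = δ_{n,m} δ_{α,β} for all indices; (2) for every n ≥ 0 and 1 ≤ i ≤ d there exist matrices A_{n,i} of size r_n^d × r_{n+1}^d and symmetric matrices B_{n,i} of size r_n^d × r_n^d such that x_i ℙ_n = A_{n,i} ℙ_{n+1} + B_{n,i} ℙ_n + A_{n−1,i}ᵀ ℙ_{n−1} (A_{−1,i} := 0), rank A_{n,i} = r_n^d, the stacked matrix (A_{n,1}ᵀ, …, A_{n,d}ᵀ)ᵀ has rank r_{n+1}^d, and in addition sup_{k≥0} ‖A_{k,i}‖₂ < ∞ and sup_{k≥0} ‖B_{k,i}‖₂ < ∞ for each 1 ≤ i ≤ d, where ‖·‖₂ denotes the operator (spectral) norm. -/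
open MvPolynomial Matrix MeasureTheory

noncomputable section

variable {d : ℕ}

/-- The `ℓ²` operator (spectral) norm of a real matrix. -/
noncomputable def l2OpNorm {m n : Type*} [Fintype m] [Fintype n] [DecidableEq n]
    (A : Matrix m n ℝ) : ℝ :=
  ‖LinearMap.toContinuousLinearMap (Matrix.toEuclideanLin A)‖

/-- `μ` has all moments finite, i.e. `μ ∈ M(ℝ^d)`. -/
def HasAllMoments (μ : Measure (Fin d → ℝ)) : Prop :=
  ∀ α : Fin d → ℕ, Integrable (fun x => ∏ i, x i ^ α i) μ

/-!
Expand `X i * P n α` in the basis formed by the members of `P`: the coefficients are the blocks of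
the matrix of multiplication by `X i`. Degree considerations alone make the blocks above the first
superdiagonal vanish and give the rank conditions. The family is orthonormal for some linear
functional `L` exactly when the block matrices are symmetric, and symmetry leaves the three-term
relation. For such an `L`, uniform bounds on the norms of the blocks amount to boundedness of
multiplication by each `X i` in the norm `p ↦ L (p * p) ^ (1 / 2)`.

If multiplication is bounded, then `L` belongs to a compact convex set of functionals whose extreme
points are multiplicative, that is, evaluations at points of a cube, so `L` is integration against a
measure on the cube by the Krein–Milman theorem. Any measure with the same moments is carried by the
same cube, because the even moments of a coordinate determine its essential supremum, and therefore
coincides with it by the Stone–Weierstrass theorem.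
-/

section PositiveFunctionals

variable {S : Type*} [CommRing S] [Algebra ℝ S] {L : S →ₗ[ℝ] ℝ}

/-- Positivity of a linear functional on a real algebra, in the sense of the moment problem:
squares are sent to nonnegative numbers. -/
def NonnegOnSquares (L : S →ₗ[ℝ] ℝ) : Prop := ∀ p, 0 ≤ L (p * p)

namespace NonnegOnSquares

lemma sq_apply_mul_le (hL : NonnegOnSquares L) (p q : S) :
    L (p * q) ^ 2 ≤ L (p * p) * L (q * q) := by
  have hquad (t : ℝ) : 0 ≤ L (q * q) * (t * t) + 2 * L (p * q) * t + L (p * p) := by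
    have hexpand : (p + t • q) * (p + t • q)
        = (t * t) • (q * q) + (2 * t) • (p * q) + p * p := by
      simp only [Algebra.smul_def, map_mul, map_ofNat]
      ring
    have hnonneg := hL (p + t • q)
    simp only [hexpand, map_add, map_smul, smul_eq_mul] at hnonneg
    linarith
  have hdiscrim := discrim_le_zero hquad
  rw [discrim] at hdiscrim
  linarith

lemma apply_one_nonneg (hL : NonnegOnSquares L) : 0 ≤ L 1 := by
  simpa using hL 1

lemma comp_mulLeft_mul_self (hL : NonnegOnSquares L) (q : S) :
    NonnegOnSquares (L ∘ₗ LinearMap.mulLeft ℝ (q * q)) := fun p => by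
  simpa only [LinearMap.comp_apply, LinearMap.mulLeft_apply, mul_mul_mul_comm] using hL (q * p)

lemma abs_apply_pow_two_pow_mul_le (hL : NonnegOnSquares L) (f : S) (k : ℕ) :
    |L f| ^ 2 ^ k * L 1 ≤ L 1 ^ 2 ^ k * |L (f ^ 2 ^ k)| := by
  induction k with
  | zero => simp [mul_comm]
  | succ k ih =>
    have hone := hL.apply_one_nonneg
    have hCS : |L (f ^ 2 ^ k)| ^ 2 ≤ L 1 * |L (f ^ 2 ^ (k + 1))| := by
      have h := hL.sq_apply_mul_le 1 (f ^ 2 ^ k)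
      rw [one_mul, one_mul, ← pow_add, ← two_mul, ← pow_succ'] at h
      rw [sq_abs]
      exact h.trans (mul_le_mul_of_nonneg_left (le_abs_self _) hone)
    rcases hone.eq_or_lt with hzero | hpos
    · simp [← hzero]
    · refine le_of_mul_le_mul_right ?_ hpos
      calc |L f| ^ 2 ^ (k + 1) * L 1 * L 1 = (|L f| ^ 2 ^ k * L 1) ^ 2 := by ring
        _ ≤ (L 1 ^ 2 ^ k * |L (f ^ 2 ^ k)|) ^ 2 := by gcongr
        _ = (L 1 ^ 2 ^ k) ^ 2 * |L (f ^ 2 ^ k)| ^ 2 := by ring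
        _ ≤ (L 1 ^ 2 ^ k) ^ 2 * (L 1 * |L (f ^ 2 ^ (k + 1))|) := by gcongr
        _ = L 1 ^ 2 ^ (k + 1) * |L (f ^ 2 ^ (k + 1))| * L 1 := by ring

lemma abs_apply_le_of_abs_apply_pow_le (hL : NonnegOnSquares L) {f : S} {C r : ℝ} (hr : 0 < r)
    (hf : ∀ k, |L (f ^ k)| ≤ C * r ^ k) : |L f| ≤ r * L 1 := by
  have hone := hL.apply_one_nonneg
  rcases hone.eq_or_lt with hzero | hpos
  · have h := hL.sq_apply_mul_le 1 f
    rw [one_mul, one_mul, ← hzero, zero_mul, sq_nonpos_iff] at h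
    rw [← hzero, mul_zero, h, abs_zero]
  · by_contra! hlt
    have hratio : 1 < |L f| / (r * L 1) := (one_lt_div (by positivity)).2 hlt
    obtain ⟨k, hk⟩ := pow_unbounded_of_one_lt (C / L 1) hratio
    have hk' : C / L 1 < (|L f| / (r * L 1)) ^ 2 ^ k :=
      hk.trans_le (pow_le_pow_right₀ hratio.le k.lt_two_pow_self.le)
    have hupper : |L f| ^ 2 ^ k * L 1 ≤ L 1 ^ 2 ^ k * (C * r ^ 2 ^ k) :=
      (hL.abs_apply_pow_two_pow_mul_le f k).trans (by gcongr; exact hf _)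
    rw [div_pow, mul_pow, div_lt_div_iff₀ hpos (by positivity)] at hk'
    linarith

end NonnegOnSquares

end PositiveFunctionals

section CubeMomentProblem

variable {σ : Type*} {R : ℝ}

/-- The cube `[-R, R]^σ`. -/
abbrev cube (σ : Type*) (R : ℝ) : Set (σ → ℝ) := Set.Icc (fun _ => -R) fun _ => R

lemma mem_cube_iff {x : σ → ℝ} : x ∈ cube σ R ↔ ∀ i, |x i| ≤ R := by
  simp only [abs_le, forall_and]
  rfl

lemma exists_subset_cube [Finite σ] {K : Set (σ → ℝ)} (hK : IsCompact K) :
    ∃ R, 0 < R ∧ K ⊆ cube σ R := by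
  cases nonempty_fintype σ
  obtain ⟨R, hR, hnorm⟩ := hK.isBounded.exists_pos_norm_le
  exact ⟨R, hR, fun x hx => mem_cube_iff.2 fun i => (norm_le_pi_norm x i).trans (hnorm x hx)⟩

/-- The cone of functionals solving the moment problem on the cube `[-R, R]^σ`: they are
nonnegative on squares and send the monomials of degree `k` to numbers of size `O(R ^ k)`. -/
def momentCone (σ : Type*) (R : ℝ) : Set (MvPolynomial σ ℝ →ₗ[ℝ] ℝ) :=
  {L | NonnegOnSquares L ∧ ∃ C, ∀ u : σ →₀ ℕ, |L (monomial u 1)| ≤ C * R ^ u.degree}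

namespace momentCone

variable {L : MvPolynomial σ ℝ →ₗ[ℝ] ℝ}

lemma smul_mem {c : ℝ} (hc : 0 ≤ c) (hL : L ∈ momentCone σ R) : c • L ∈ momentCone σ R := by
  obtain ⟨hnonneg, C, hC⟩ := hL
  refine ⟨fun p => mul_nonneg hc (hnonneg p), c * C, fun u => ?_⟩
  rw [LinearMap.smul_apply, smul_eq_mul, abs_mul, abs_of_nonneg hc, mul_assoc]
  exact mul_le_mul_of_nonneg_left (hC u) hc

lemma exists_abs_apply_mul_monomial_le (hL : L ∈ momentCone σ R)
    (f : MvPolynomial σ ℝ) :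
    ∃ C, ∀ u : σ →₀ ℕ, |L (f * monomial u 1)| ≤ C * R ^ u.degree := by
  obtain ⟨C, hC⟩ := hL.2
  induction f using MvPolynomial.induction_on' with
  | monomial v a =>
    refine ⟨|a| * C * R ^ v.degree, fun u => ?_⟩
    have hmul : monomial v a * monomial u 1 = a • monomial (v + u) (1 : ℝ) := by
      rw [monomial_mul, smul_monomial, mul_one, smul_eq_mul, mul_one]
    calc |L (monomial v a * monomial u 1)| = |a| * |L (monomial (v + u) 1)| := by
          rw [hmul, map_smul, smul_eq_mul, abs_mul]
      _ ≤ |a| * (C * R ^ (v + u).degree) := by gcongr; exact hC _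
      _ = |a| * C * R ^ v.degree * R ^ u.degree := by rw [map_add, pow_add]; ring
  | add p q hp hq =>
    obtain ⟨Cp, hCp⟩ := hp
    obtain ⟨Cq, hCq⟩ := hq
    refine ⟨Cp + Cq, fun u => ?_⟩
    rw [add_mul, map_add, add_mul]
    exact (abs_add_le _ _).trans (add_le_add (hCp u) (hCq u))

lemma abs_apply_monomial_le (hR : 0 < R) (hL : L ∈ momentCone σ R) (u : σ →₀ ℕ) :
    |L (monomial u 1)| ≤ R ^ u.degree * L 1 := by
  obtain ⟨C, hC⟩ := hL.2
  refine hL.1.abs_apply_le_of_abs_apply_pow_le (C := C) (by positivity) fun k => ?_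
  simpa [monomial_pow, ← pow_mul, mul_comm] using hC (k • u)

lemma abs_apply_le (hR : 0 < R) (hL : L ∈ momentCone σ R) (p : MvPolynomial σ ℝ) :
    |L p| ≤ (∑ u ∈ p.support, |p.coeff u| * R ^ u.degree) * L 1 := by
  have hsum : L p = ∑ u ∈ p.support, p.coeff u * L (monomial u 1) := by
    conv_lhs => rw [p.as_sum, map_sum]
    exact Finset.sum_congr rfl fun u _ => by
      rw [← smul_eq_mul, ← map_smul, smul_monomial, smul_eq_mul, mul_one]
  rw [hsum, Finset.sum_mul]
  refine (Finset.abs_sum_le_sum_abs _ _).trans (Finset.sum_le_sum fun u _ => ?_)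
  rw [abs_mul, mul_assoc]
  exact mul_le_mul_of_nonneg_left (abs_apply_monomial_le hR hL u) (abs_nonneg _)

lemma eq_zero_of_apply_one_eq_zero (hR : 0 < R) (hL : L ∈ momentCone σ R) (h1 : L 1 = 0) :
    L = 0 :=
  LinearMap.ext fun p => by simpa [h1] using abs_apply_le hR hL p

lemma abs_apply_X_mul_sq_le (hR : 0 < R) (hL : L ∈ momentCone σ R) (i : σ)
    (p : MvPolynomial σ ℝ) : |L (X i * (p * p))| ≤ R * L (p * p) := by
  obtain ⟨C, hC⟩ := exists_abs_apply_mul_monomial_le hL (p * p)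
  rw [mul_comm]
  have hpow (k : ℕ) : |(L ∘ₗ LinearMap.mulLeft ℝ (p * p)) (X i ^ k)| ≤ C * R ^ k := by
    rw [X_pow_eq_monomial, LinearMap.comp_apply, LinearMap.mulLeft_apply]
    simpa only [Finsupp.degree_single] using hC (Finsupp.single i k)
  have hbound := (hL.1.comp_mulLeft_mul_self p).abs_apply_le_of_abs_apply_pow_le hR hpow
  rwa [LinearMap.comp_apply, LinearMap.comp_apply, LinearMap.mulLeft_apply,
    LinearMap.mulLeft_apply, mul_one] at hbound

lemma comp_mulLeft_mem (hL : L ∈ momentCone σ R) {f : MvPolynomial σ ℝ}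
    (hf : ∀ p, 0 ≤ L (f * (p * p))) : L ∘ₗ LinearMap.mulLeft ℝ f ∈ momentCone σ R :=
  ⟨hf, exists_abs_apply_mul_monomial_le hL f⟩

lemma comp_mulLeft_smul_one_add_X_mem (hR : 0 < R) (hL : L ∈ momentCone σ R) (i : σ) :
    L ∘ₗ LinearMap.mulLeft ℝ (R • 1 + X i) ∈ momentCone σ R :=
  comp_mulLeft_mem hL fun p => by
    have h := (abs_le.1 (abs_apply_X_mul_sq_le hR hL i p)).1
    rw [add_mul, map_add, smul_one_mul, map_smul, smul_eq_mul]
    linarith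

lemma comp_mulLeft_smul_one_sub_X_mem (hR : 0 < R) (hL : L ∈ momentCone σ R) (i : σ) :
    L ∘ₗ LinearMap.mulLeft ℝ (R • 1 - X i) ∈ momentCone σ R :=
  comp_mulLeft_mem hL fun p => by
    have h := (abs_le.1 (abs_apply_X_mul_sq_le hR hL i p)).2
    rw [sub_mul, map_sub, smul_one_mul, map_smul, smul_eq_mul]
    linarith

/- `2R(R² - x²) = (R + x)(R - x)² + (R - x)(R + x)²`. -/
lemma apply_X_mul_mul_self_le {i : σ} (hR : 0 < R)
    (hX : ∀ p, |L (X i * (p * p))| ≤ R * L (p * p)) (p : MvPolynomial σ ℝ) :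
    L (X i * p * (X i * p)) ≤ R ^ 2 * L (p * p) := by
  have hminus := (abs_le.1 (hX (R • p - X i * p))).1
  have hplus := (abs_le.1 (hX (R • p + X i * p))).2
  have hsq_minus : (R • p - X i * p) * (R • p - X i * p)
      = (R * R) • (p * p) - (2 * R) • (X i * (p * p)) + X i * p * (X i * p) := by
    simp only [smul_eq_C_mul, map_mul, map_ofNat]
    ring
  have hsq_plus : (R • p + X i * p) * (R • p + X i * p)
      = (R * R) • (p * p) + (2 * R) • (X i * (p * p)) + X i * p * (X i * p) := by
    simp only [smul_eq_C_mul, map_mul, map_ofNat]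
    ring
  rw [hsq_minus] at hminus
  rw [hsq_plus] at hplus
  simp only [mul_add, mul_sub, mul_smul_comm, map_add, map_sub, map_smul, smul_eq_mul]
    at hminus hplus
  have hprod : X i * (X i * (p * p)) = X i * p * (X i * p) := by ring
  rw [hprod] at hminus hplus
  refine le_of_mul_le_mul_left ?_ hR
  linarith

lemma apply_monomial_mul_mul_self_le (hX : ∀ i p, L (X i * p * (X i * p)) ≤ R ^ 2 * L (p * p))
    (u : σ →₀ ℕ) (p : MvPolynomial σ ℝ) :
    L (monomial u 1 * p * (monomial u 1 * p)) ≤ (R ^ u.degree) ^ 2 * L (p * p) := by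
  induction u using Finsupp.induction_linear generalizing p with
  | zero => simp
  | add u v hu hv =>
    have hmul : monomial (u + v) (1 : ℝ) * p = monomial u 1 * (monomial v 1 * p) := by
      rw [← mul_assoc, monomial_mul, mul_one]
    calc _ ≤ (R ^ u.degree) ^ 2 * L (monomial v 1 * p * (monomial v 1 * p)) := hmul ▸ hu _
      _ ≤ (R ^ u.degree) ^ 2 * ((R ^ v.degree) ^ 2 * L (p * p)) := by gcongr; exact hv p
      _ = (R ^ (u + v).degree) ^ 2 * L (p * p) := by rw [map_add]; ring
  | single i k =>
    rw [Finsupp.degree_single, ← X_pow_eq_monomial]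
    induction k with
    | zero => simp
    | succ k ih =>
      calc L (X i ^ (k + 1) * p * (X i ^ (k + 1) * p))
          = L (X i * (X i ^ k * p) * (X i * (X i ^ k * p))) := by congr 1; ring
        _ ≤ R ^ 2 * L (X i ^ k * p * (X i ^ k * p)) := hX _ _
        _ ≤ R ^ 2 * ((R ^ k) ^ 2 * L (p * p)) := by gcongr
        _ = (R ^ (k + 1)) ^ 2 * L (p * p) := by ring

lemma mem_of_abs_apply_X_mul_sq_le (hR : 0 < R) (hL : NonnegOnSquares L)
    (hX : ∀ i p, |L (X i * (p * p))| ≤ R * L (p * p)) : L ∈ momentCone σ R := by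
  refine ⟨hL, L 1, fun u => abs_le_of_sq_le_sq ?_ (by have := hL.apply_one_nonneg; positivity)⟩
  have hCS := hL.sq_apply_mul_le 1 (monomial u 1)
  have hmon := apply_monomial_mul_mul_self_le (fun i => apply_X_mul_mul_self_le hR (hX i)) u 1
  rw [one_mul, one_mul] at hCS
  rw [mul_one, one_mul] at hmon
  calc L (monomial u 1) ^ 2 ≤ L 1 * L (monomial u 1 * monomial u 1) := hCS
    _ ≤ L 1 * ((R ^ u.degree) ^ 2 * L 1) :=
      mul_le_mul_of_nonneg_left hmon hL.apply_one_nonneg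
    _ = (L 1 * R ^ u.degree) ^ 2 := by ring

end momentCone

/-- The normalized functionals in `momentCone σ R`, regarded as functions so that they carry the
topology of pointwise convergence. -/
def momentStates (σ : Type*) (R : ℝ) : Set (MvPolynomial σ ℝ → ℝ) :=
  (⇑) '' {L | L ∈ momentCone σ R ∧ L 1 = 1}

lemma coe_mem_momentStates {L : MvPolynomial σ ℝ →ₗ[ℝ] ℝ} :
    ⇑L ∈ momentStates σ R ↔ L ∈ momentCone σ R ∧ L 1 = 1 :=
  DFunLike.coe_injective.mem_set_image

lemma momentStates_eq_inter (hR : 0 < R) :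
    momentStates σ R = Set.range ((⇑) : (MvPolynomial σ ℝ →ₗ[ℝ] ℝ) → MvPolynomial σ ℝ → ℝ) ∩
      {f | (∀ p, 0 ≤ f (p * p)) ∧ (∀ u, |f (monomial u 1)| ≤ R ^ u.degree) ∧ f 1 = 1} := by
  ext f
  constructor
  · rintro ⟨L, ⟨hL, h1⟩, rfl⟩
    exact ⟨⟨L, rfl⟩, hL.1,
      fun u => by simpa [h1] using momentCone.abs_apply_monomial_le hR hL u, h1⟩
  · rintro ⟨⟨L, rfl⟩, hsq, hmon, h1⟩
    exact ⟨L, ⟨⟨hsq, 1, by simpa using hmon⟩, h1⟩, rfl⟩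

lemma isCompact_momentStates (hR : 0 < R) : IsCompact (momentStates σ R) := by
  refine (isCompact_univ_pi fun p : MvPolynomial σ ℝ =>
    isCompact_Icc (a := -∑ u ∈ p.support, |p.coeff u| * R ^ u.degree)
      (b := ∑ u ∈ p.support, |p.coeff u| * R ^ u.degree)).of_isClosed_subset ?_ ?_
  · rw [momentStates_eq_inter hR]
    refine (LinearMap.isClosed_range_coe _ _ _).inter ?_
    simp only [Set.ofPred_and, Set.ofPred_forall]
    refine (isClosed_iInter fun p => ?_).inter ((isClosed_iInter fun u => ?_).inter ?_)
    · exact isClosed_le continuous_const (continuous_apply _)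
    · exact isClosed_le (continuous_apply _).abs continuous_const
    · exact isClosed_eq (continuous_apply _) continuous_const
  · rintro _ ⟨L, ⟨hL, h1⟩, rfl⟩ p -
    exact abs_le.1 (by simpa [h1] using momentCone.abs_apply_le hR hL p)

lemma convex_momentStates (hR : 0 < R) : Convex ℝ (momentStates σ R) := by
  rw [momentStates_eq_inter hR]
  refine (LinearMap.range (LinearMap.ltoFun ℝ (MvPolynomial σ ℝ) ℝ ℝ)).convex.inter ?_
  rintro f ⟨hfsq, hfmon, hf1⟩ g ⟨hgsq, hgmon, hg1⟩ a b ha hb hab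
  refine ⟨fun p => ?_, fun u => ?_, ?_⟩
  · exact add_nonneg (mul_nonneg ha (hfsq p)) (mul_nonneg hb (hgsq p))
  · calc |a * f (monomial u 1) + b * g (monomial u 1)|
        ≤ a * |f (monomial u 1)| + b * |g (monomial u 1)| := by
          refine (abs_add_le _ _).trans_eq ?_
          rw [abs_mul, abs_mul, abs_of_nonneg ha, abs_of_nonneg hb]
      _ ≤ a * R ^ u.degree + b * R ^ u.degree := by gcongr <;> [exact hfmon u; exact hgmon u]
      _ = R ^ u.degree := by rw [← add_mul, hab, one_mul]
  · simp [hf1, hg1, hab]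

lemma eq_smul_of_mem_extremePoints_momentStates (hR : 0 < R)
    {L L₁ L₂ : MvPolynomial σ ℝ →ₗ[ℝ] ℝ} (hL : ⇑L ∈ (momentStates σ R).extremePoints ℝ)
    (hL₁ : L₁ ∈ momentCone σ R) (hL₂ : L₂ ∈ momentCone σ R) (hadd : L₁ + L₂ = L) :
    L₁ = L₁ 1 • L := by
  have hone : L 1 = 1 := (coe_mem_momentStates.1 (extremePoints_subset hL)).2
  have hsum : L₁ 1 + L₂ 1 = 1 := by rw [← hone, ← hadd, LinearMap.add_apply]
  rcases hL₁.1.apply_one_nonneg.eq_or_lt with h₁ | h₁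
  · rw [← h₁, zero_smul, momentCone.eq_zero_of_apply_one_eq_zero hR hL₁ h₁.symm]
  rcases hL₂.1.apply_one_nonneg.eq_or_lt with h₂ | h₂
  · rw [← h₂, add_zero] at hsum
    rw [hsum, one_smul, ← hadd, momentCone.eq_zero_of_apply_one_eq_zero hR hL₂ h₂.symm, add_zero]
  have hnormalize {M : MvPolynomial σ ℝ →ₗ[ℝ] ℝ} (hM : M ∈ momentCone σ R) (hpos : 0 < M 1) :
      ⇑((M 1)⁻¹ • M) ∈ momentStates σ R :=
    ⟨_, ⟨momentCone.smul_mem (inv_nonneg.2 hpos.le) hM, inv_mul_cancel₀ hpos.ne'⟩, rfl⟩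
  have hsegment : ⇑L ∈ openSegment ℝ ⇑((L₁ 1)⁻¹ • L₁) ⇑((L₂ 1)⁻¹ • L₂) := by
    refine ⟨L₁ 1, L₂ 1, h₁, h₂, hsum, ?_⟩
    rw [← LinearMap.coe_smul, ← LinearMap.coe_smul, smul_inv_smul₀ h₁.ne', smul_inv_smul₀ h₂.ne',
      ← hadd]
    rfl
  have hext := ((mem_extremePoints.1 hL).2 _ (hnormalize hL₁ h₁) _ (hnormalize hL₂ h₂) hsegment).1
  rw [← DFunLike.coe_injective hext, smul_inv_smul₀ h₁.ne']

/- `L` is the sum of the two functionals `(2R)⁻¹ L((R ± X i) ·)`, so extremality makes them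
multiples of `L`. -/
lemma apply_X_mul_of_mem_extremePoints_momentStates (hR : 0 < R) {L : MvPolynomial σ ℝ →ₗ[ℝ] ℝ}
    (hL : ⇑L ∈ (momentStates σ R).extremePoints ℝ) (i : σ) (p : MvPolynomial σ ℝ) :
    L (X i * p) = L (X i) * L p := by
  obtain ⟨hmem, hone⟩ := coe_mem_momentStates.1 (extremePoints_subset hL)
  have hscale : (0 : ℝ) ≤ (2 * R)⁻¹ := by positivity
  have hsplit := eq_smul_of_mem_extremePoints_momentStates hR hL
    (momentCone.smul_mem hscale (momentCone.comp_mulLeft_smul_one_add_X_mem hR hmem i))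
    (momentCone.smul_mem hscale (momentCone.comp_mulLeft_smul_one_sub_X_mem hR hmem i)) (by
      refine LinearMap.ext fun q => ?_
      simp only [LinearMap.add_apply, LinearMap.smul_apply, LinearMap.comp_apply,
        LinearMap.mulLeft_apply, add_mul, sub_mul, smul_one_mul, map_add, map_sub, map_smul,
        smul_eq_mul]
      field_simp
      ring)
  have happly := LinearMap.congr_fun hsplit p
  simp only [LinearMap.smul_apply, LinearMap.comp_apply, LinearMap.mulLeft_apply, add_mul,
    smul_one_mul, map_add, map_smul, smul_eq_mul, mul_one, hone] at happly
  field_simp at happly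
  linarith

lemma exists_eq_eval_of_mem_extremePoints_momentStates (hR : 0 < R) {f : MvPolynomial σ ℝ → ℝ}
    (hf : f ∈ (momentStates σ R).extremePoints ℝ) :
    ∃ x ∈ cube σ R, f = fun p => eval x p := by
  obtain ⟨L, ⟨hmem, hone⟩, rfl⟩ := extremePoints_subset hf
  have hcoord (i : σ) : |L (X i)| ≤ R := by
    simpa [hone] using momentCone.abs_apply_X_mul_sq_le hR hmem i 1
  refine ⟨fun i => L (X i), mem_cube_iff.2 hcoord, funext fun p => ?_⟩
  induction p using MvPolynomial.induction_on with
  | C a => rw [eval_C, ← mul_one (C a), C_mul', map_smul, hone, smul_eq_mul, mul_one]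
  | add p q hp hq => rw [map_add, map_add, hp, hq]
  | mul_X p i hp =>
    rw [mul_comm p, apply_X_mul_of_mem_extremePoints_momentStates hR hf, hp, map_mul, eval_X]

/-- The functionals `p ↦ ∫ p dμ` of the probability measures `μ` on the cube `[-R, R]^σ`. -/
def cubeMomentFunctionals (σ : Type*) (R : ℝ) : Set (MvPolynomial σ ℝ → ℝ) :=
  (fun (μ : FiniteMeasure (cube σ R)) p => ∫ x : cube σ R, eval x.1 p ∂μ) '' {μ | μ.mass = 1}

variable [Countable σ]

lemma isCompact_cubeMomentFunctionals : IsCompact (cubeMomentFunctionals σ R) := by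
  refine (isCompact_setOfPred_finiteMeasure_eq_of_compactSpace _ 1).image
    (continuous_pi fun p => ?_)
  exact FiniteMeasure.continuous_integral_continuousMap
    (⟨fun x => eval x.1 p, (MvPolynomial.continuous_eval p).comp continuous_subtype_val⟩ :
      C(cube σ R, ℝ))

lemma integrable_eval_cube (μ : FiniteMeasure (cube σ R)) (p : MvPolynomial σ ℝ) :
    Integrable (fun x : cube σ R => eval x.1 p) μ :=
  ((MvPolynomial.continuous_eval p).comp continuous_subtype_val).integrable_of_hasCompactSupport
    (.of_compactSpace _)

lemma convex_cubeMomentFunctionals : Convex ℝ (cubeMomentFunctionals σ R) := by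
  rintro _ ⟨μ, hμ, rfl⟩ _ ⟨ν, hν, rfl⟩ a b ha hb hab
  lift a to NNReal using ha
  lift b to NNReal using hb
  refine ⟨a • μ + b • ν, ?_, funext fun p => ?_⟩
  · change (a • μ + b • ν) Set.univ = 1
    rw [FiniteMeasure.coeFn_add, FiniteMeasure.coeFn_smul, FiniteMeasure.coeFn_smul]
    change a * μ.mass + b * ν.mass = 1
    rw [hμ, hν, mul_one, mul_one]
    exact_mod_cast hab
  · simp only [FiniteMeasure.toMeasure_add, FiniteMeasure.toMeasure_smul]
    rw [integral_add_measure ((integrable_eval_cube μ p).smul_measure_nnreal)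
      ((integrable_eval_cube ν p).smul_measure_nnreal), integral_smul_nnreal_measure,
      integral_smul_nnreal_measure]
    rfl

lemma eval_mem_cubeMomentFunctionals {x : σ → ℝ} (hx : x ∈ cube σ R) :
    (fun p => eval x p) ∈ cubeMomentFunctionals σ R := by
  let δ : ProbabilityMeasure (cube σ R) := ⟨Measure.dirac ⟨x, hx⟩, inferInstance⟩
  exact ⟨δ.toFiniteMeasure, δ.mass_toFiniteMeasure, funext fun p =>
    integral_dirac (fun y : cube σ R => eval y.1 p) ⟨x, hx⟩⟩

lemma momentStates_subset_cubeMomentFunctionals (hR : 0 < R) :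
    momentStates σ R ⊆ cubeMomentFunctionals σ R := by
  rw [← closure_convexHull_extremePoints (isCompact_momentStates hR) (convex_momentStates hR)]
  refine closure_minimal (convexHull_min (fun f hf => ?_) convex_cubeMomentFunctionals)
    isCompact_cubeMomentFunctionals.isClosed
  obtain ⟨x, hx, rfl⟩ := exists_eq_eval_of_mem_extremePoints_momentStates hR hf
  exact eval_mem_cubeMomentFunctionals hx

theorem exists_measure_of_mem_momentCone (hR : 0 < R) {L : MvPolynomial σ ℝ →ₗ[ℝ] ℝ}
    (hL : L ∈ momentCone σ R) (h1 : L 1 = 1) :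
    ∃ μ : Measure (σ → ℝ), IsFiniteMeasure μ ∧ (∀ᵐ x ∂μ, x ∈ cube σ R) ∧
      ∀ p, ∫ x, eval x p ∂μ = L p := by
  obtain ⟨μ, -, hμ⟩ := momentStates_subset_cubeMomentFunctionals hR ⟨L, ⟨hL, h1⟩, rfl⟩
  have hcube : MeasurableSet (cube σ R) := measurableSet_Icc
  refine ⟨(μ : Measure (cube σ R)).map (↑), inferInstance, ?_, fun p => ?_⟩
  · exact (ae_map_iff measurable_subtype_coe.aemeasurable hcube).2 (.of_forall Subtype.prop)
  · rw [(MeasurableEmbedding.subtype_coe hcube).integral_map, ← hμ]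

end CubeMomentProblem

section Determinacy

lemma ae_abs_le_of_integral_pow_le {Ω : Type*} [MeasurableSpace Ω] {μ : Measure Ω} {f : Ω → ℝ}
    {C R : ℝ} (hR : 0 ≤ R) (hint : ∀ k, Integrable (fun x => f x ^ (2 * k)) μ)
    (hle : ∀ k, ∫ x, f x ^ (2 * k) ∂μ ≤ C * R ^ (2 * k)) : ∀ᵐ x ∂μ, |f x| ≤ R := by
  refine ae_le_const_iff_forall_gt_measure_zero _ _ |>.2 fun r hr => ?_
  have hr0 : 0 < r := hR.trans_lt hr
  have hfinite : IsFiniteMeasure μ :=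
    (integrable_const_iff.1 (by simpa using hint 0)).resolve_left (one_ne_zero (α := ℝ))
  have hmarkov (k : ℕ) : μ.real {x | r ≤ |f x|} ≤ C * ((R / r) ^ 2) ^ k := by
    have hsub : {x | r ≤ |f x|} ⊆ {x | r ^ (2 * k) ≤ f x ^ (2 * k)} := fun x hx => by
      rw [Set.mem_ofPred_eq, ← (even_two_mul k).pow_abs (f x)]
      exact pow_le_pow_left₀ hr0.le hx _
    have h := (mul_le_mul_of_nonneg_left (measureReal_mono hsub) (by positivity)).trans
      ((mul_meas_ge_le_integral_of_nonneg (.of_forall fun x => (even_two_mul k).pow_nonneg _)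
        (hint k) (r ^ (2 * k))).trans (hle k))
    rw [← pow_mul, div_pow, mul_div_assoc', le_div_iff₀ (by positivity)]
    linarith
  have hlim : Filter.Tendsto (fun k => C * ((R / r) ^ 2) ^ k) Filter.atTop (nhds (C * 0)) :=
    (tendsto_pow_atTop_nhds_zero_of_lt_one (by positivity)
      (pow_lt_one₀ (by positivity) ((div_lt_one hr0).2 hr) two_ne_zero)).const_mul C
  rw [mul_zero] at hlim
  exact (measureReal_eq_zero_iff).1 (le_antisymm (ge_of_tendsto' hlim hmarkov) measureReal_nonneg)

variable {σ : Type*} {R : ℝ}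

section IntegralFunctional

variable {μ : Measure (σ → ℝ)}

/-- Integration of polynomials against a measure with finite moments. -/
def integralFunctional (hμ : ∀ p : MvPolynomial σ ℝ, Integrable (fun x => eval x p) μ) :
    MvPolynomial σ ℝ →ₗ[ℝ] ℝ where
  toFun p := ∫ x, eval x p ∂μ
  map_add' p q := by
    simp only [map_add]
    exact integral_add (hμ p) (hμ q)
  map_smul' c p := by
    simp only [smul_eval]
    exact integral_const_mul c _

variable (hμ : ∀ p : MvPolynomial σ ℝ, Integrable (fun x => eval x p) μ)

lemma integralFunctional_X_mul_mul_self_le (hcube : ∀ᵐ x ∂μ, x ∈ cube σ R) (i : σ)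
    (p : MvPolynomial σ ℝ) :
    integralFunctional hμ (X i * p * (X i * p)) ≤ R ^ 2 * integralFunctional hμ (p * p) := by
  rw [← smul_eq_mul (R ^ 2), ← map_smul]
  refine integral_mono_ae (hμ _) (hμ _) ?_
  filter_upwards [hcube] with x hx
  have hsq : x i * x i ≤ R ^ 2 := by
    rw [← sq, ← sq_abs]
    exact pow_le_pow_left₀ (abs_nonneg _) (mem_cube_iff.1 hx i) 2
  calc eval x (X i * p * (X i * p)) = x i * x i * (eval x p * eval x p) := by
        simp only [map_mul, eval_X]
        ring
    _ ≤ R ^ 2 * (eval x p * eval x p) := mul_le_mul_of_nonneg_right hsq (mul_self_nonneg _)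
    _ = eval x (R ^ 2 • (p * p)) := by rw [smul_eval, map_mul]

end IntegralFunctional

lemma integrable_eval_of_ae_mem_cube [Countable σ] {μ : Measure (σ → ℝ)} [IsFiniteMeasure μ]
    (hμ : ∀ᵐ x ∂μ, x ∈ cube σ R) (p : MvPolynomial σ ℝ) : Integrable (fun x => eval x p) μ := by
  rw [← Measure.restrict_eq_self_of_ae_mem hμ]
  exact (MvPolynomial.continuous_eval p).continuousOn.integrableOn_compact isCompact_Icc

lemma ae_mem_cube_of_integral_eval_eq [Countable σ] {μ ν : Measure (σ → ℝ)} (hR : 0 ≤ R)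
    (hμ : ∀ p : MvPolynomial σ ℝ, Integrable (fun x => eval x p) μ)
    (hν : ∀ p : MvPolynomial σ ℝ, Integrable (fun x => eval x p) ν)
    (hcube : ∀ᵐ x ∂μ, x ∈ cube σ R)
    (heq : ∀ p : MvPolynomial σ ℝ, ∫ x, eval x p ∂ν = ∫ x, eval x p ∂μ) :
    ∀ᵐ x ∂ν, x ∈ cube σ R := by
  have hcoord (i : σ) : ∀ᵐ x ∂ν, |x i| ≤ R := by
    refine ae_abs_le_of_integral_pow_le (C := ∫ x, eval x (1 : MvPolynomial σ ℝ) ∂μ) hR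
      (fun k => by simpa using hν (X i ^ (2 * k))) fun k => ?_
    have hpow := heq (X i ^ (2 * k))
    simp only [map_pow, eval_X, map_one] at hpow ⊢
    rw [hpow, ← integral_mul_const]
    refine integral_mono_ae (by simpa using hμ (X i ^ (2 * k)))
      (by simpa using (hμ 1).mul_const (R ^ (2 * k))) ?_
    filter_upwards [hcube] with x hx
    rw [one_mul, ← (even_two_mul k).pow_abs]
    exact pow_le_pow_left₀ (abs_nonneg _) (mem_cube_iff.1 hx i) _
  filter_upwards [ae_all_iff.2 hcoord] with x hx
  exact mem_cube_iff.2 hx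

/-- Polynomials as continuous functions on a set. -/
def evalOn (K : Set (σ → ℝ)) : MvPolynomial σ ℝ →ₐ[ℝ] C(K, ℝ) :=
  aeval fun i => ⟨fun x => x.1 i, (continuous_apply i).comp continuous_subtype_val⟩

lemma evalOn_apply (K : Set (σ → ℝ)) (p : MvPolynomial σ ℝ) (x : K) :
    evalOn K p x = eval x.1 p := by
  induction p using MvPolynomial.induction_on with
  | C a => simp [evalOn]
  | add p q hp hq => simp [hp, hq]
  | mul_X p i hp =>
    rw [map_mul, ContinuousMap.mul_apply, hp, map_mul, eval_X]
    simp [evalOn]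

/-- The star subalgebra of the bounded continuous functions on a set that are given by a
polynomial. -/
def polynomialsOn (K : Set (σ → ℝ)) : StarSubalgebra ℝ (BoundedContinuousFunction K ℝ) where
  __ := (evalOn K).range.comap (BoundedContinuousFunction.toContinuousMapₐ ℝ)
  star_mem' := id

lemma separatesPoints_polynomialsOn {K : Set (σ → ℝ)} [CompactSpace K] :
    ((polynomialsOn K).map
      (BoundedContinuousFunction.toContinuousMapStarₐ ℝ)).SeparatesPoints := by
  intro x y hxy
  obtain ⟨i, hi⟩ := Function.ne_iff.1 fun h => hxy (Subtype.ext h)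
  exact ⟨evalOn K (X i), ⟨_, ⟨.mkOfCompact (evalOn K (X i)), ⟨X i, rfl⟩, rfl⟩, rfl⟩,
    by simpa [evalOn_apply] using hi⟩

theorem eq_of_integral_eval_eq_of_isCompact [Countable σ] {K : Set (σ → ℝ)} (hK : IsCompact K)
    {μ ν : Measure (σ → ℝ)} [IsFiniteMeasure μ] [IsFiniteMeasure ν] (hμ : ∀ᵐ x ∂μ, x ∈ K)
    (hν : ∀ᵐ x ∂ν, x ∈ K) (heq : ∀ p : MvPolynomial σ ℝ, ∫ x, eval x p ∂ν = ∫ x, eval x p ∂μ) :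
    ν = μ := by
  have : CompactSpace K := isCompact_iff_compactSpace.1 hK
  have hKm : MeasurableSet K := hK.measurableSet
  have : PolishSpace K := hK.isClosed.polishSpace
  have hrestrict {ρ : Measure (σ → ℝ)} (hρ : ∀ᵐ x ∂ρ, x ∈ K) :
      (ρ.comap ((↑) : K → σ → ℝ)).map (↑) = ρ := by
    rw [map_comap_subtype_coe hKm, Measure.restrict_eq_self_of_ae_mem hρ]
  rw [← hrestrict hν, ← hrestrict hμ]
  congr 1
  refine ext_of_forall_mem_subalgebra_integral_eq_of_polish (𝕜 := ℝ)
    separatesPoints_polynomialsOn fun g hg => ?_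
  obtain ⟨p, hp⟩ := hg
  have hgp (x : K) : g x = eval x.1 p := by
    rw [← evalOn_apply]
    exact (DFunLike.congr_fun hp x).symm
  have hintegral {ρ : Measure (σ → ℝ)} (hρ : ∀ᵐ x ∂ρ, x ∈ K) :
      ∫ x, g x ∂ρ.comap ((↑) : K → σ → ℝ) = ∫ x, eval x p ∂ρ := by
    simp only [hgp]
    rw [← (MeasurableEmbedding.subtype_coe hKm).integral_map (g := fun x => eval x p),
      hrestrict hρ]
  rw [hintegral hν, hintegral hμ, heq p]

end Determinacy

section Moments

/-- The determinacy of a measure in the multivariate moment problem. -/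
def IsDeterminate (μ : Measure (Fin d → ℝ)) : Prop :=
  ∀ ν : Measure (Fin d → ℝ), HasAllMoments ν →
    (∀ α : Fin d → ℕ, ∫ x, ∏ i, x i ^ α i ∂ν = ∫ x, ∏ i, x i ^ α i ∂μ) → ν = μ

variable {μ ν : Measure (Fin d → ℝ)} {R : ℝ}

lemma eval_mono (x : Fin d → ℝ) (α : Fin d → ℕ) : eval x (mono α) = ∏ i, x i ^ α i := by
  simp [mono, eval_monomial, Finsupp.prod_fintype]

lemma HasAllMoments.isFiniteMeasure (hμ : HasAllMoments μ) : IsFiniteMeasure μ :=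
  (integrable_const_iff.1 (by simpa using hμ 0)).resolve_left (one_ne_zero (α := ℝ))

lemma HasAllMoments.integrable_eval (hμ : HasAllMoments μ) (p : MPoly d) :
    Integrable (fun x => eval x p) μ := by
  induction p using MvPolynomial.induction_on' with
  | monomial u a =>
    simpa [eval_monomial, Finsupp.prod_fintype] using (hμ u).const_mul a
  | add p q hp hq =>
    simp only [map_add]
    exact hp.add hq

lemma integral_eval_eq_of_moments_eq (hμ : HasAllMoments μ) (hν : HasAllMoments ν)
    (heq : ∀ α : Fin d → ℕ, ∫ x, ∏ i, x i ^ α i ∂ν = ∫ x, ∏ i, x i ^ α i ∂μ) (p : MPoly d) :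
    ∫ x, eval x p ∂ν = ∫ x, eval x p ∂μ := by
  suffices integralFunctional hν.integrable_eval = integralFunctional hμ.integrable_eval from
    LinearMap.congr_fun this p
  refine MvPolynomial.linearMap_ext fun u => LinearMap.ext_ring ?_
  simpa [integralFunctional, eval_monomial, Finsupp.prod_fintype] using heq u

lemma hasAllMoments_of_ae_mem_cube [IsFiniteMeasure μ] (hμ : ∀ᵐ x ∂μ, x ∈ cube (Fin d) R) :
    HasAllMoments μ := fun α => by
  simpa [eval_mono] using integrable_eval_of_ae_mem_cube hμ (mono α)

theorem isDeterminate_of_ae_mem_cube [IsFiniteMeasure μ] (hR : 0 ≤ R)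
    (hcube : ∀ᵐ x ∂μ, x ∈ cube (Fin d) R) : IsDeterminate μ := by
  intro ν hν heq
  have hμ := hasAllMoments_of_ae_mem_cube hcube
  have hpoly := integral_eval_eq_of_moments_eq hμ hν heq
  have := hν.isFiniteMeasure
  exact eq_of_integral_eval_eq_of_isCompact isCompact_Icc hcube
    (ae_mem_cube_of_integral_eval_eq hR hμ.integrable_eval hν.integrable_eval hcube hpoly) hpoly

end Moments


section GradedBases

/-- The linear combination of the members of level `n` of a graded family of polynomials, as a
linear map of its coefficient vector. -/
def levelSum (P : ∀ n, Idx d n → MPoly d) (n : ℕ) : (Idx d n → ℝ) →ₗ[ℝ] MPoly d :=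
  Fintype.linearCombination ℝ (P n)

lemma X_mul_mem_restrictTotalDegree {σ R : Type*} [CommSemiring R] [Nontrivial R] {m n : ℕ}
    (hmn : m < n) (i : σ) {p : MvPolynomial σ R} (hp : p ∈ restrictTotalDegree σ R m) :
    X i * p ∈ restrictTotalDegree σ R n := by
  rw [mem_restrictTotalDegree] at hp ⊢
  refine (totalDegree_mul _ _).trans ?_
  rw [totalDegree_X]
  omega

lemma restrictTotalDegree_succ_le {σ R : Type*} [CommSemiring R] (n : ℕ) :
    restrictTotalDegree σ R (n + 1) ≤ restrictTotalDegree σ R n ⊔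
      ⨆ i, (restrictTotalDegree σ R n).map (LinearMap.mulLeft R (X i)) := by
  have hmonomial {k : ℕ} {u : σ →₀ ℕ} (hu : u.degree ≤ k) :
      monomial u (1 : R) ∈ restrictTotalDegree σ R k :=
    (mem_restrictTotalDegree _ _ _).2 ((totalDegree_monomial_le _ _).trans hu)
  rw [restrictTotalDegree, restrictSupport_eq_span, Submodule.span_le]
  rintro _ ⟨u, hu, rfl⟩
  change u.degree ≤ n + 1 at hu
  by_cases hzero : u = 0
  · exact Submodule.mem_sup_left (hmonomial (by simp [hzero]))
  obtain ⟨i, hi⟩ := Finsupp.ne_iff.1 hzero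
  obtain ⟨w, rfl⟩ : ∃ w, u = Finsupp.single i 1 + w :=
    ⟨u - Finsupp.single i 1, (add_tsub_cancel_of_le
      (Finsupp.single_le_iff.2 (Nat.one_le_iff_ne_zero.2 hi))).symm⟩
  have hw : w.degree ≤ n := by
    rw [map_add, Finsupp.degree_single] at hu
    omega
  refine Submodule.mem_sup_right (Submodule.mem_iSup_of_mem i ⟨_, hmonomial hw, ?_⟩)
  simp [X, monomial_mul]

/-- The monomials as a basis of the space of polynomials, graded by total degree. -/
def monoBasis (d : ℕ) : Module.Basis (Σ n, Idx d n) ℝ (MPoly d) :=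
  (basisMonomials (Fin d) ℝ).reindex
    ((Equiv.sigmaFiberEquiv fun α : Fin d → ℕ => ∑ i, α i).trans
      Finsupp.equivFunOnFinite.symm).symm

lemma monoBasis_apply (s : Σ n, Idx d n) : monoBasis d s = mono s.2.1 := by
  simp [monoBasis, mono]

lemma spansPi_mono : SpansPi fun n (α : Idx d n) => mono α.1 := by
  intro n
  rw [restrictTotalDegree, restrictSupport_eq_span]
  congr 1
  ext p
  constructor
  · rintro ⟨m, hm, ⟨α, rfl⟩, rfl⟩
    exact ⟨Finsupp.equivFunOnFinite.symm α, by simpa [Finsupp.sum_fintype] using hm, rfl⟩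
  · rintro ⟨u, hu, rfl⟩
    exact ⟨∑ i, u i, by simpa [Finsupp.sum_fintype] using hu, ⟨u, rfl⟩, by simp [mono]⟩

namespace SpansPi

variable {P : ∀ n, Idx d n → MPoly d}

lemma apply_mem_restrictTotalDegree (hspan : SpansPi P) {m n : ℕ} (hmn : m ≤ n) (α : Idx d m) :
    P m α ∈ restrictTotalDegree (Fin d) ℝ n := by
  rw [← hspan n]
  exact Submodule.subset_span ⟨m, hmn, α, rfl⟩

lemma map_constr_restrictTotalDegree (hspan : SpansPi P) (n : ℕ) :
    (restrictTotalDegree (Fin d) ℝ n).map ((monoBasis d).constr ℝ fun s => P s.1 s.2) =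
      restrictTotalDegree (Fin d) ℝ n := by
  rw [← spansPi_mono, Submodule.map_span, spansPi_mono, ← hspan]
  congr 1
  have hconstr {m : ℕ} (α : Idx d m) :
      (monoBasis d).constr ℝ (fun s => P s.1 s.2) (mono α.1) = P m α := by
    rw [← monoBasis_apply ⟨m, α⟩, Module.Basis.constr_basis]
  ext p
  constructor
  · rintro ⟨_, ⟨m, hm, α, rfl⟩, rfl⟩
    exact ⟨m, hm, α, hconstr α⟩
  · rintro ⟨m, hm, α, rfl⟩
    exact ⟨_, ⟨m, hm, α, rfl⟩, hconstr α⟩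

/- The linear map sending each monomial to the corresponding member of `P` is surjective on every
finite-dimensional space of polynomials of bounded degree, hence injective. -/
lemma linearIndependent (hspan : SpansPi P) :
    LinearIndependent ℝ fun s : Σ n, Idx d n => P s.1 s.2 := by
  set T := (monoBasis d).constr ℝ fun s => P s.1 s.2 with hT
  have hker : LinearMap.ker T = ⊥ := by
    refine LinearMap.ker_eq_bot'.2 fun p hp => ?_
    have hmap := hspan.map_constr_restrictTotalDegree p.totalDegree
    have hmem := (mem_restrictTotalDegree (Fin d) p.totalDegree p).2 le_rfl
    let Tn := T.restrict fun q hq => hmap.le (Submodule.mem_map_of_mem hq)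
    have hsurj : Function.Surjective Tn := fun q => by
      obtain ⟨r, hr, hrq⟩ := hmap.ge q.2
      exact ⟨⟨r, hr⟩, Subtype.ext hrq⟩
    have hzero : Tn ⟨p, hmem⟩ = 0 := Subtype.ext hp
    exact congrArg Subtype.val
      ((map_eq_zero_iff Tn (LinearMap.injective_iff_surjective.2 hsurj)).1 hzero)
  have hcomp : (fun s : Σ n, Idx d n => P s.1 s.2) = T ∘ monoBasis d := by
    ext1 s
    rw [Function.comp_apply, hT, Module.Basis.constr_basis]
  rw [hcomp]
  exact (monoBasis d).linearIndependent.map' T hker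

/-- A graded spanning family as a basis of the space of polynomials. -/
def basis (hspan : SpansPi P) : Module.Basis (Σ n, Idx d n) ℝ (MPoly d) :=
  .mk hspan.linearIndependent fun p _ => by
    have hp := (mem_restrictTotalDegree (Fin d) p.totalDegree p).2 le_rfl
    rw [← hspan] at hp
    refine Submodule.span_mono ?_ hp
    rintro _ ⟨m, -, α, rfl⟩
    exact ⟨⟨m, α⟩, rfl⟩

lemma basis_apply (hspan : SpansPi P) (s : Σ n, Idx d n) : hspan.basis s = P s.1 s.2 := by
  simp [basis]

/-- The coefficients of a polynomial on the members of level `n` of the family. -/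
def level (hspan : SpansPi P) (n : ℕ) : MPoly d →ₗ[ℝ] (Idx d n → ℝ) :=
  LinearMap.pi fun α => hspan.basis.coord ⟨n, α⟩

lemma ext_level (hspan : SpansPi P) {p q : MPoly d}
    (h : ∀ n, hspan.level n p = hspan.level n q) : p = q :=
  hspan.basis.ext_elem fun ⟨n, α⟩ => congrFun (h n) α

lemma level_apply_self (hspan : SpansPi P) (n : ℕ) (α : Idx d n) :
    hspan.level n (P n α) = Pi.single α 1 := by
  ext β
  rw [level, LinearMap.pi_apply, Module.Basis.coord_apply, ← hspan.basis_apply ⟨n, α⟩,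
    Module.Basis.repr_self, Finsupp.single_apply, Pi.single_apply]
  simp [eq_comm]

lemma level_apply_of_ne (hspan : SpansPi P) {n m : ℕ} (hnm : n ≠ m) (α : Idx d n) :
    hspan.level m (P n α) = 0 := by
  ext β
  rw [level, LinearMap.pi_apply, Module.Basis.coord_apply, ← hspan.basis_apply ⟨n, α⟩,
    Module.Basis.repr_self, Finsupp.single_eq_of_ne (by simp [hnm.symm]), Pi.zero_apply]

lemma level_levelSum_self (hspan : SpansPi P) (n : ℕ) (v : Idx d n → ℝ) :
    hspan.level n (levelSum P n v) = v := by
  simp only [levelSum, Fintype.linearCombination_apply, map_sum, map_smul, level_apply_self]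
  exact (pi_eq_sum_univ' v).symm

lemma level_levelSum_of_ne (hspan : SpansPi P) {n m : ℕ} (hnm : n ≠ m) (v : Idx d n → ℝ) :
    hspan.level m (levelSum P n v) = 0 := by
  simp [levelSum, Fintype.linearCombination_apply, hspan.level_apply_of_ne hnm]

lemma level_eq_zero_of_mem (hspan : SpansPi P) {n m : ℕ} {p : MPoly d}
    (hp : p ∈ restrictTotalDegree (Fin d) ℝ n) (hnm : n < m) : hspan.level m p = 0 := by
  suffices h : restrictTotalDegree (Fin d) ℝ n ≤ LinearMap.ker (hspan.level m) from h hp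
  rw [← hspan n, Submodule.span_le]
  rintro _ ⟨k, hk, α, rfl⟩
  exact hspan.level_apply_of_ne (hk.trans_lt hnm).ne α

lemma sum_levelSum_level (hspan : SpansPi P) {n : ℕ} {p : MPoly d}
    (hp : p ∈ restrictTotalDegree (Fin d) ℝ n) :
    ∑ m ∈ Finset.range (n + 1), levelSum P m (hspan.level m p) = p := by
  refine hspan.ext_level fun k => ?_
  rw [map_sum]
  rcases lt_or_ge k (n + 1) with hk | hk
  · rw [Finset.sum_eq_single_of_mem k (Finset.mem_range.2 hk)
      fun m _ hm => hspan.level_levelSum_of_ne hm _, hspan.level_levelSum_self]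
  · rw [hspan.level_eq_zero_of_mem hp hk]
    refine Finset.sum_eq_zero fun m hm => hspan.level_levelSum_of_ne ?_ _
    exact ((Finset.mem_range.1 hm).trans_le hk).ne

lemma levelSum_mem_restrictTotalDegree (hspan : SpansPi P) {m n : ℕ} (hmn : m ≤ n)
    (v : Idx d m → ℝ) : levelSum P m v ∈ restrictTotalDegree (Fin d) ℝ n := by
  rw [levelSum, Fintype.linearCombination_apply]
  exact Submodule.sum_mem _ fun α _ =>
    Submodule.smul_mem _ _ (hspan.apply_mem_restrictTotalDegree hmn α)

lemma mem_restrictTotalDegree_of_level_succ_eq_zero (hspan : SpansPi P) {n : ℕ} {p : MPoly d}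
    (hp : p ∈ restrictTotalDegree (Fin d) ℝ (n + 1)) (hlevel : hspan.level (n + 1) p = 0) :
    p ∈ restrictTotalDegree (Fin d) ℝ n := by
  rw [← hspan.sum_levelSum_level hp, Finset.sum_range_succ, hlevel, map_zero, add_zero]
  exact Submodule.sum_mem _ fun m hm =>
    hspan.levelSum_mem_restrictTotalDegree (Nat.lt_succ_iff.1 (Finset.mem_range.1 hm)) _

end SpansPi

end GradedBases

section JacobiBlocks

namespace SpansPi

variable {P : ∀ n, Idx d n → MPoly d}

/-- The block at levels `n`, `m` of the matrix of multiplication by `X i` in the graded basis;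
its row `α` holds the level-`m` coefficients of `X i * P n α`. -/
def jacobiBlock (hspan : SpansPi P) (i : Fin d) (n m : ℕ) : Matrix (Idx d n) (Idx d m) ℝ :=
  Matrix.of fun α => hspan.level m (X i * P n α)

lemma jacobiBlock_row (hspan : SpansPi P) (i : Fin d) (n m : ℕ) (α : Idx d n) :
    hspan.jacobiBlock i n m α = hspan.level m (X i * P n α) :=
  rfl

lemma jacobiBlock_eq_zero (hspan : SpansPi P) (i : Fin d) {n m : ℕ} (hnm : n + 1 < m) :
    hspan.jacobiBlock i n m = 0 := by
  refine funext fun α => ?_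
  exact hspan.level_eq_zero_of_mem (X_mul_mem_restrictTotalDegree (Nat.lt_succ_self _) i
    (hspan.apply_mem_restrictTotalDegree le_rfl α)) hnm

lemma level_X_mul_levelSum (hspan : SpansPi P) (i : Fin d) (n m : ℕ) (v : Idx d n → ℝ) :
    hspan.level m (X i * levelSum P n v) = v ᵥ* hspan.jacobiBlock i n m := by
  simp only [levelSum, Fintype.linearCombination_apply, Finset.mul_sum, mul_smul_comm, map_sum,
    map_smul, vecMul_eq_sum, jacobiBlock_row]

lemma X_mul_eq_sum_levelSum (hspan : SpansPi P) (i : Fin d) (n : ℕ) (α : Idx d n) :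
    X i * P n α = ∑ m ∈ Finset.range (n + 2), levelSum P m (hspan.jacobiBlock i n m α) :=
  (hspan.sum_levelSum_level (X_mul_mem_restrictTotalDegree (Nat.lt_succ_self _) i
    (hspan.apply_mem_restrictTotalDegree le_rfl α))).symm

/- If `v ᵥ* J = 0` for the block `J` from level `n` to level `n + 1`, then `X i * levelSum P n v`
has degree at most `n`. -/
lemma rank_jacobiBlock (hspan : SpansPi P) (n : ℕ) (i : Fin d) :
    (hspan.jacobiBlock i n (n + 1)).rank = Fintype.card (Idx d n) := by
  refine LinearIndependent.rank_matrix (vecMul_injective_iff.1 ?_)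
  refine (injective_iff_map_eq_zero (vecMulLinear (hspan.jacobiBlock i n (n + 1)))).2 fun v hv => ?_
  rw [vecMulLinear_apply, ← level_X_mul_levelSum] at hv
  have hdeg := hspan.mem_restrictTotalDegree_of_level_succ_eq_zero (X_mul_mem_restrictTotalDegree
    n.lt_succ_self i (hspan.levelSum_mem_restrictTotalDegree le_rfl v)) hv
  rw [← hspan.level_levelSum_self n v]
  by_cases hzero : levelSum P n v = 0
  · rw [hzero, map_zero]
  rw [mem_restrictTotalDegree, totalDegree_mul_of_isDomain (X_ne_zero i) hzero, totalDegree_X]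
    at hdeg
  exact hspan.level_eq_zero_of_mem ((mem_restrictTotalDegree _ _ _).2 le_rfl) (by omega)

/- The functional `p ↦ level (n + 1) p ⬝ᵥ w` vanishes on polynomials of degree at most `n`, and on
`X i` times these; together they span the polynomials of degree at most `n + 1`. -/
lemma eq_zero_of_jacobiBlock_mulVec_eq_zero (hspan : SpansPi P) {n : ℕ} {w : Idx d (n + 1) → ℝ}
    (hw : ∀ i, hspan.jacobiBlock i n (n + 1) *ᵥ w = 0) : w = 0 := by
  let φ : MPoly d →ₗ[ℝ] ℝ := dotProductBilin ℝ ℝ w ∘ₗ hspan.level (n + 1)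
  have hlow : restrictTotalDegree (Fin d) ℝ n ≤ LinearMap.ker φ := fun p hp => by
    simp [φ, hspan.level_eq_zero_of_mem hp n.lt_succ_self]
  have hshift (i : Fin d) : (restrictTotalDegree (Fin d) ℝ n).map (LinearMap.mulLeft ℝ (X i)) ≤
      LinearMap.ker φ := by
    rw [Submodule.map_le_iff_le_comap, ← hspan n, Submodule.span_le]
    rintro _ ⟨m, hm, α, rfl⟩
    rcases hm.eq_or_lt with rfl | hm
    · exact (dotProduct_comm _ _).trans (congrFun (hw i) α)
    · exact hlow (X_mul_mem_restrictTotalDegree hm i (hspan.apply_mem_restrictTotalDegree le_rfl α))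
  have hφ := (restrictTotalDegree_succ_le n).trans (sup_le hlow (iSup_le hshift))
  ext α
  simpa [φ, hspan.level_apply_self] using hφ (hspan.apply_mem_restrictTotalDegree le_rfl α)

lemma rank_stacked_jacobiBlock (hspan : SpansPi P) (n : ℕ) :
    (Matrix.of fun (s : Fin d × Idx d n) (β : Idx d (n + 1)) =>
      hspan.jacobiBlock s.1 n (n + 1) s.2 β).rank = Fintype.card (Idx d (n + 1)) := by
  rw [← rank_transpose]
  refine LinearIndependent.rank_matrix (mulVec_injective_iff.1 ?_)
  refine (injective_iff_map_eq_zero (mulVecLin _)).2 fun w hw => ?_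
  exact hspan.eq_zero_of_jacobiBlock_mulVec_eq_zero fun i => funext fun α => congrFun hw (i, α)

end SpansPi

/-- The three-term relation with coefficient matrices `A n i` and symmetric `B n i`; the case
`n = 0`, in which no term of level `-1` occurs, is kept apart. -/
structure IsThreeTerm (P : ∀ n, Idx d n → MPoly d)
    (A : ∀ n : ℕ, Fin d → Matrix (Idx d n) (Idx d (n + 1)) ℝ)
    (B : ∀ n : ℕ, Fin d → Matrix (Idx d n) (Idx d n) ℝ) : Prop where
  symm : ∀ n i, (B n i).IsSymm
  zero : ∀ (i : Fin d) (α : Idx d 0),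
    X i * P 0 α = levelSum P 1 (A 0 i α) + levelSum P 0 (B 0 i α)
  succ : ∀ (n : ℕ) (i : Fin d) (α : Idx d (n + 1)), X i * P (n + 1) α =
    levelSum P (n + 2) (A (n + 1) i α) + levelSum P (n + 1) (B (n + 1) i α) +
      levelSum P n ((A n i)ᵀ α)

variable {P : ∀ n, Idx d n → MPoly d} {A : ∀ n : ℕ, Fin d → Matrix (Idx d n) (Idx d (n + 1)) ℝ}
  {B : ∀ n : ℕ, Fin d → Matrix (Idx d n) (Idx d n) ℝ}

lemma isThreeTerm_iff : IsThreeTerm P A B ↔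
    (∀ n i, (B n i).IsSymm) ∧
    (∀ (i : Fin d) (α : Idx d 0), X i * P 0 α =
      (∑ β : Idx d 1, A 0 i α β • P 1 β) + ∑ β : Idx d 0, B 0 i α β • P 0 β) ∧
    ∀ (n : ℕ) (i : Fin d) (α : Idx d (n + 1)), X i * P (n + 1) α =
      (∑ β : Idx d (n + 2), A (n + 1) i α β • P (n + 2) β) +
      (∑ β : Idx d (n + 1), B (n + 1) i α β • P (n + 1) β) +
      ∑ β : Idx d n, (A n i)ᵀ α β • P n β :=
  ⟨fun h => ⟨h.symm, h.zero, h.succ⟩, fun ⟨hsymm, hzero, hsucc⟩ => ⟨hsymm, hzero, hsucc⟩⟩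

namespace IsThreeTerm

lemma jacobiBlock_succ_right (h : IsThreeTerm P A B) (hspan : SpansPi P) (n : ℕ) (i : Fin d) :
    hspan.jacobiBlock i n (n + 1) = A n i := by
  refine funext fun α => ?_
  cases n <;>
    simp (disch := omega) [hspan.jacobiBlock_row, h.zero, h.succ, hspan.level_levelSum_self,
      hspan.level_levelSum_of_ne]

lemma jacobiBlock_self (h : IsThreeTerm P A B) (hspan : SpansPi P) (n : ℕ) (i : Fin d) :
    hspan.jacobiBlock i n n = B n i := by
  refine funext fun α => ?_
  cases n <;>
    simp (disch := omega) [hspan.jacobiBlock_row, h.zero, h.succ, hspan.level_levelSum_self,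
      hspan.level_levelSum_of_ne]

lemma jacobiBlock_succ_left (h : IsThreeTerm P A B) (hspan : SpansPi P) (n : ℕ) (i : Fin d) :
    hspan.jacobiBlock i (n + 1) n = (A n i)ᵀ := by
  refine funext fun α => ?_
  simp [hspan.jacobiBlock_row, h.succ, hspan.level_levelSum_self, hspan.level_levelSum_of_ne]

lemma jacobiBlock_eq_zero_of_lt (h : IsThreeTerm P A B) (hspan : SpansPi P) {n m : ℕ} (i : Fin d)
    (hmn : m + 1 < n) : hspan.jacobiBlock i n m = 0 := by
  obtain ⟨k, rfl⟩ : ∃ k, n = k + 1 := Nat.exists_eq_succ_of_ne_zero (by omega)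
  refine funext fun α => ?_
  rw [hspan.jacobiBlock_row, h.succ, map_add, map_add, hspan.level_levelSum_of_ne (by omega),
    hspan.level_levelSum_of_ne (by omega), hspan.level_levelSum_of_ne (by omega), add_zero,
    add_zero]
  rfl

lemma transpose_jacobiBlock (h : IsThreeTerm P A B) (hspan : SpansPi P) (i : Fin d) (n m : ℕ) :
    (hspan.jacobiBlock i n m)ᵀ = hspan.jacobiBlock i m n := by
  wlog hnm : n ≤ m generalizing n m
  · rw [← this m n (le_of_not_ge hnm), transpose_transpose]
  rcases hnm.eq_or_lt with rfl | hlt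
  · rw [h.jacobiBlock_self, (h.symm n i).eq]
  rcases (Nat.succ_le_of_lt hlt).eq_or_lt with rfl | hlt
  · rw [h.jacobiBlock_succ_right, h.jacobiBlock_succ_left]
  · rw [hspan.jacobiBlock_eq_zero i hlt, h.jacobiBlock_eq_zero_of_lt hspan i hlt, transpose_zero]

end IsThreeTerm

lemma SpansPi.isThreeTerm_jacobiBlock (hspan : SpansPi P)
    (hsymm : ∀ i n m, (hspan.jacobiBlock i n m)ᵀ = hspan.jacobiBlock i m n) :
    IsThreeTerm P (fun n i => hspan.jacobiBlock i n (n + 1))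
      (fun n i => hspan.jacobiBlock i n n) where
  symm n i := hsymm i n n
  zero i α := by
    simp only [hspan.X_mul_eq_sum_levelSum, Finset.sum_range_succ, Finset.sum_range_zero]
    abel
  succ n i α := by
    have hfar : ∑ m ∈ Finset.range n, levelSum P m (hspan.jacobiBlock i (n + 1) m α) = 0 :=
      Finset.sum_eq_zero fun m hm => by
        rw [← hsymm, hspan.jacobiBlock_eq_zero i (by simpa using hm)]
        exact map_zero _
    rw [hspan.X_mul_eq_sum_levelSum, Finset.sum_range_succ, Finset.sum_range_succ,
      Finset.sum_range_succ, hfar, hsymm]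
    abel

end JacobiBlocks

section OrthonormalFamilies

/-- Orthonormality of a graded family of polynomials with respect to the linear functional `L`,
that is, for the bilinear form `(p, q) ↦ L (p * q)`. -/
structure IsOrthonormal (L : MPoly d →ₗ[ℝ] ℝ) (P : ∀ n, Idx d n → MPoly d) : Prop where
  self : ∀ n (α β : Idx d n), L (P n α * P n β) = if α = β then 1 else 0
  of_ne : ∀ n m : ℕ, n ≠ m → ∀ (α : Idx d n) (β : Idx d m), L (P n α * P m β) = 0

namespace IsOrthonormal

variable {L : MPoly d →ₗ[ℝ] ℝ} {P : ∀ n, Idx d n → MPoly d}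

lemma apply_one (hL : IsOrthonormal L P) (hP0 : ∀ α : Idx d 0, P 0 α = 1) : L 1 = 1 := by
  simpa [hP0] using hL.self 0 ⟨0, by simp⟩ ⟨0, by simp⟩

lemma apply_mul (hL : IsOrthonormal L P) (hspan : SpansPi P) (p : MPoly d) (n : ℕ)
    (α : Idx d n) : L (p * P n α) = hspan.level n p α := by
  suffices h : L ∘ₗ LinearMap.mulRight ℝ (P n α) = LinearMap.proj α ∘ₗ hspan.level n from
    LinearMap.congr_fun h p
  refine hspan.basis.ext fun ⟨m, β⟩ => ?_
  rw [LinearMap.comp_apply, LinearMap.mulRight_apply, LinearMap.comp_apply, LinearMap.proj_apply,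
    hspan.basis_apply]
  rcases eq_or_ne m n with rfl | hmn
  · rw [hL.self, hspan.level_apply_self, Pi.single_apply]
    simp only [eq_comm]
  · rw [hL.of_ne m n hmn, hspan.level_apply_of_ne hmn, Pi.zero_apply]

lemma apply_mul_levelSum (hL : IsOrthonormal L P) (hspan : SpansPi P) (p : MPoly d) (n : ℕ)
    (v : Idx d n → ℝ) : L (p * levelSum P n v) = hspan.level n p ⬝ᵥ v := by
  simp only [levelSum, Fintype.linearCombination_apply, Finset.mul_sum, mul_smul_comm, map_sum,
    map_smul, hL.apply_mul hspan, smul_eq_mul, dotProduct, mul_comm]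

lemma apply_mul_eq_sum (hL : IsOrthonormal L P) (hspan : SpansPi P) (p : MPoly d) {n : ℕ}
    {q : MPoly d} (hq : q ∈ restrictTotalDegree (Fin d) ℝ n) :
    L (p * q) = ∑ m ∈ Finset.range (n + 1), hspan.level m p ⬝ᵥ hspan.level m q := by
  conv_lhs => rw [← hspan.sum_levelSum_level hq]
  simp only [Finset.mul_sum, map_sum, hL.apply_mul_levelSum hspan]

lemma nonnegOnSquares (hL : IsOrthonormal L P) (hspan : SpansPi P) : NonnegOnSquares L :=
  fun p => by
    rw [hL.apply_mul_eq_sum hspan p ((mem_restrictTotalDegree _ _ p).2 le_rfl)]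
    exact Finset.sum_nonneg fun m _ => dotProduct_self_star_nonneg _

lemma dotProduct_level_self_le (hL : IsOrthonormal L P) (hspan : SpansPi P) (p : MPoly d)
    (n : ℕ) : hspan.level n p ⬝ᵥ hspan.level n p ≤ L (p * p) := by
  rw [hL.apply_mul_eq_sum hspan p
    ((mem_restrictTotalDegree _ _ p).2 (le_max_left p.totalDegree n))]
  exact Finset.single_le_sum (f := fun m => hspan.level m p ⬝ᵥ hspan.level m p)
    (fun m _ => dotProduct_self_star_nonneg _) (Finset.mem_range.2 (by omega))

lemma transpose_jacobiBlock (hL : IsOrthonormal L P) (hspan : SpansPi P) (i : Fin d)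
    (n m : ℕ) : (hspan.jacobiBlock i n m)ᵀ = hspan.jacobiBlock i m n := by
  ext β α
  rw [transpose_apply, hspan.jacobiBlock_row, hspan.jacobiBlock_row, ← hL.apply_mul hspan,
    ← hL.apply_mul hspan, mul_right_comm]

end IsOrthonormal

lemma SpansPi.toDual_X_mul {P : ∀ n, Idx d n → MPoly d} (hspan : SpansPi P)
    (hsymm : ∀ i n m, (hspan.jacobiBlock i n m)ᵀ = hspan.jacobiBlock i m n) (i : Fin d)
    (p q : MPoly d) :
    hspan.basis.toDual (X i * p) q = hspan.basis.toDual p (X i * q) := by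
  suffices h : hspan.basis.toDual ∘ₗ LinearMap.mulLeft ℝ (X i) =
      hspan.basis.toDual.compl₂ (LinearMap.mulLeft ℝ (X i)) from LinearMap.congr_fun₂ h p q
  refine hspan.basis.ext fun ⟨n, α⟩ => hspan.basis.ext fun ⟨m, β⟩ => ?_
  simp only [LinearMap.comp_apply, LinearMap.compl₂_apply, LinearMap.mulLeft_apply]
  rw [Module.Basis.toDual_apply_left, Module.Basis.toDual_apply_right, hspan.basis_apply,
    hspan.basis_apply]
  exact congrFun₂ (hsymm i n m) β α

lemma SpansPi.toDual_mul {P : ∀ n, Idx d n → MPoly d} (hspan : SpansPi P)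
    (hsymm : ∀ i n m, (hspan.jacobiBlock i n m)ᵀ = hspan.jacobiBlock i m n) (f p q : MPoly d) :
    hspan.basis.toDual (f * p) q = hspan.basis.toDual p (f * q) := by
  induction f using MvPolynomial.induction_on generalizing p q with
  | C a => simp only [← smul_eq_C_mul, map_smul, LinearMap.smul_apply]
  | add f g hf hg => simp only [add_mul, map_add, LinearMap.add_apply, hf, hg]
  | mul_X f i hf => rw [mul_assoc, hf, hspan.toDual_X_mul hsymm, mul_comm f (X i), mul_assoc]

theorem SpansPi.exists_isOrthonormal {P : ∀ n, Idx d n → MPoly d} (hspan : SpansPi P)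
    (hsymm : ∀ i n m, (hspan.jacobiBlock i n m)ᵀ = hspan.jacobiBlock i m n) :
    ∃ L : MPoly d →ₗ[ℝ] ℝ, IsOrthonormal L P := by
  have hmul (s t : Σ n, Idx d n) :
      hspan.basis.toDual 1 (P s.1 s.2 * P t.1 t.2) = if s = t then 1 else 0 := by
    rw [← hspan.toDual_mul hsymm, mul_one, ← hspan.basis_apply, ← hspan.basis_apply,
      Module.Basis.toDual_apply]
  refine ⟨hspan.basis.toDual 1, fun n α β => ?_, fun n m hnm α β => ?_⟩
  · simpa using hmul ⟨n, α⟩ ⟨n, β⟩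
  · simpa [hnm] using hmul ⟨n, α⟩ ⟨m, β⟩

end OrthonormalFamilies

section OperatorNorms

variable {m n : Type*} [Fintype m] [Fintype n] [DecidableEq n] {A : Matrix m n ℝ}

lemma l2OpNorm_le {R : ℝ} (hR : 0 ≤ R) (h : ∀ w, A *ᵥ w ⬝ᵥ A *ᵥ w ≤ R ^ 2 * (w ⬝ᵥ w)) :
    l2OpNorm A ≤ R := by
  refine ContinuousLinearMap.opNorm_le_bound _ hR fun w => le_of_sq_le_sq ?_ (by positivity)
  rw [mul_pow, EuclideanSpace.real_norm_sq_eq, EuclideanSpace.real_norm_sq_eq]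
  simpa [dotProduct, ← sq] using h w.ofLp

lemma abs_dotProduct_mulVec_le {M : ℝ} (hM : l2OpNorm A ≤ M) (v : m → ℝ) (w : n → ℝ) :
    |v ⬝ᵥ A *ᵥ w| ≤ M * (v ⬝ᵥ v + w ⬝ᵥ w) / 2 := by
  have hM0 : 0 ≤ M := (norm_nonneg _).trans hM
  let v' : EuclideanSpace ℝ m := WithLp.toLp 2 v
  let w' : EuclideanSpace ℝ n := WithLp.toLp 2 w
  have hA : ‖Matrix.toEuclideanLin A w'‖ ≤ M * ‖w'‖ :=
    ((LinearMap.toContinuousLinearMap (Matrix.toEuclideanLin A)).le_opNorm w').trans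
      (mul_le_mul_of_nonneg_right hM (norm_nonneg _))
  have hv : ‖v'‖ ^ 2 = v ⬝ᵥ v := by simp [v', EuclideanSpace.real_norm_sq_eq, dotProduct, ← sq]
  have hw : ‖w'‖ ^ 2 = w ⬝ᵥ w := by simp [w', EuclideanSpace.real_norm_sq_eq, dotProduct, ← sq]
  calc |v ⬝ᵥ A *ᵥ w| = |inner ℝ (Matrix.toEuclideanLin A w') v'| := rfl
    _ ≤ ‖Matrix.toEuclideanLin A w'‖ * ‖v'‖ := abs_real_inner_le_norm _ _
    _ ≤ M * ‖w'‖ * ‖v'‖ := mul_le_mul_of_nonneg_right hA (norm_nonneg _)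
    _ ≤ M * (‖v'‖ ^ 2 + ‖w'‖ ^ 2) / 2 := by nlinarith [mul_nonneg hM0 (sq_nonneg (‖v'‖ - ‖w'‖))]
    _ = M * (v ⬝ᵥ v + w ⬝ᵥ w) / 2 := by rw [hv, hw]

end OperatorNorms

section BoundedMultiplication

lemma sum_sum_band_le {M : ℝ} (hM : 0 ≤ M) {a : ℕ → ℝ} (ha : ∀ n, 0 ≤ a n) (N : ℕ) :
    (∑ n ∈ Finset.range N, ∑ m ∈ Finset.range N,
      if m ≤ n + 1 ∧ n ≤ m + 1 then M * (a m + a n) / 2 else 0) ≤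
      3 * M * ∑ n ∈ Finset.range N, a n := by
  let c (n m : ℕ) : ℝ := if m ≤ n + 1 ∧ n ≤ m + 1 then M * a n / 2 else 0
  have hcard (n : ℕ) : ((Finset.range N).filter fun m => m ≤ n + 1 ∧ n ≤ m + 1).card ≤ 3 := by
    refine (Finset.card_le_card (t := Finset.Icc (n - 1) (n + 1)) fun m hm => ?_).trans ?_
    · simp only [Finset.mem_filter, Finset.mem_Icc] at hm ⊢
      omega
    · rw [Nat.card_Icc]
      omega
  have hrow (n : ℕ) : ∑ m ∈ Finset.range N, c n m ≤ 3 * M * a n / 2 := by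
    have hcard' := Nat.cast_le (α := ℝ) |>.2 (hcard n)
    rw [← Finset.sum_filter, Finset.sum_const, nsmul_eq_mul]
    calc _ ≤ ((3 : ℕ) : ℝ) * (M * a n / 2) :=
          mul_le_mul_of_nonneg_right hcard' (by have := ha n; positivity)
      _ = 3 * M * a n / 2 := by push_cast; ring
  calc _ = ∑ n ∈ Finset.range N, ∑ m ∈ Finset.range N, (c m n + c n m) := by
        refine Finset.sum_congr rfl fun n _ => Finset.sum_congr rfl fun m _ => ?_
        simp only [c, and_comm (a := n ≤ m + 1)]
        split_ifs <;> ring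
    _ = 2 * ∑ n ∈ Finset.range N, ∑ m ∈ Finset.range N, c n m := by
        simp only [Finset.sum_add_distrib]
        rw [Finset.sum_comm (f := fun n m => c m n), two_mul]
    _ ≤ 2 * ∑ n ∈ Finset.range N, 3 * M * a n / 2 := by gcongr with n; exact hrow n
    _ = 3 * M * ∑ n ∈ Finset.range N, a n := by
        simp only [Finset.mul_sum]
        exact Finset.sum_congr rfl fun n _ => by ring

namespace IsOrthonormal

variable {L : MPoly d →ₗ[ℝ] ℝ} {P : ∀ n, Idx d n → MPoly d}

lemma isThreeTerm (hL : IsOrthonormal L P) (hspan : SpansPi P) :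
    IsThreeTerm P (fun n i => hspan.jacobiBlock i n (n + 1))
      (fun n i => hspan.jacobiBlock i n n) :=
  hspan.isThreeTerm_jacobiBlock (hL.transpose_jacobiBlock hspan)

lemma l2OpNorm_jacobiBlock_le (hL : IsOrthonormal L P) (hspan : SpansPi P) {R : ℝ} (hR : 0 ≤ R)
    {i : Fin d} (hX : ∀ p, L (X i * p * (X i * p)) ≤ R ^ 2 * L (p * p)) (n m : ℕ) :
    l2OpNorm (hspan.jacobiBlock i n m) ≤ R := by
  refine l2OpNorm_le hR fun w => ?_
  have hlevel : hspan.jacobiBlock i n m *ᵥ w = hspan.level n (X i * levelSum P m w) := by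
    rw [hspan.level_X_mul_levelSum, ← hL.transpose_jacobiBlock hspan, mulVec_transpose]
  calc _ ≤ L (X i * levelSum P m w * (X i * levelSum P m w)) := by
        rw [hlevel]
        exact hL.dotProduct_level_self_le hspan _ _
    _ ≤ R ^ 2 * L (levelSum P m w * levelSum P m w) := hX _
    _ = R ^ 2 * (w ⬝ᵥ w) := by
        rw [hL.apply_mul_levelSum hspan, hspan.level_levelSum_self]

lemma abs_dotProduct_jacobiBlock_mulVec_le (hL : IsOrthonormal L P) (hspan : SpansPi P)
    {i : Fin d} {M : ℝ} (hA : ∀ n, l2OpNorm (hspan.jacobiBlock i n (n + 1)) ≤ M)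
    (hB : ∀ n, l2OpNorm (hspan.jacobiBlock i n n) ≤ M) {n m : ℕ} (v : Idx d n → ℝ)
    (w : Idx d m → ℝ) : |v ⬝ᵥ hspan.jacobiBlock i n m *ᵥ w| ≤
      if n ≤ m + 1 ∧ m ≤ n + 1 then M * (v ⬝ᵥ v + w ⬝ᵥ w) / 2 else 0 := by
  wlog hnm : n ≤ m generalizing n m
  · rw [dotProduct_mulVec, ← hL.transpose_jacobiBlock hspan, vecMul_transpose, dotProduct_comm]
    simpa only [and_comm, add_comm] using this w v (le_of_not_ge hnm)
  rcases hnm.eq_or_lt with rfl | hlt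
  · simpa using abs_dotProduct_mulVec_le (hB n) v w
  rcases (Nat.succ_le_of_lt hlt).eq_or_lt with rfl | hlt
  · rw [if_pos (by omega)]
    exact abs_dotProduct_mulVec_le (hA n) v w
  · rw [hspan.jacobiBlock_eq_zero i hlt, if_neg (by omega), zero_mulVec, dotProduct_zero, abs_zero]

lemma apply_X_mul_mul_self_eq_sum (hL : IsOrthonormal L P) (hspan : SpansPi P) (i : Fin d) {N : ℕ}
    {p : MPoly d} (hp : p ∈ restrictTotalDegree (Fin d) ℝ N) : L (X i * (p * p)) =
      ∑ n ∈ Finset.range (N + 1), ∑ m ∈ Finset.range (N + 1),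
        hspan.level m p ⬝ᵥ hspan.jacobiBlock i m n *ᵥ hspan.level n p := by
  rw [← mul_assoc, hL.apply_mul_eq_sum hspan _ hp]
  refine Finset.sum_congr rfl fun n _ => ?_
  conv_lhs => enter [1]; rw [← hspan.sum_levelSum_level hp]
  simp only [Finset.mul_sum, map_sum, hspan.level_X_mul_levelSum, sum_dotProduct,
    dotProduct_mulVec]

lemma abs_apply_X_mul_mul_self_le (hL : IsOrthonormal L P) (hspan : SpansPi P) {i : Fin d} {M : ℝ}
    (hA : ∀ n, l2OpNorm (hspan.jacobiBlock i n (n + 1)) ≤ M)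
    (hB : ∀ n, l2OpNorm (hspan.jacobiBlock i n n) ≤ M) (p : MPoly d) :
    |L (X i * (p * p))| ≤ 3 * M * L (p * p) := by
  have hp := (mem_restrictTotalDegree _ _ p).2 le_rfl
  rw [hL.apply_X_mul_mul_self_eq_sum hspan i hp, hL.apply_mul_eq_sum hspan p hp]
  refine ((Finset.abs_sum_le_sum_abs _ _).trans (Finset.sum_le_sum fun n _ =>
    (Finset.abs_sum_le_sum_abs _ _).trans (Finset.sum_le_sum fun m _ =>
      hL.abs_dotProduct_jacobiBlock_mulVec_le hspan hA hB _ _))).trans ?_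
  exact sum_sum_band_le ((norm_nonneg _).trans (hB 0))
    (fun n => dotProduct_self_star_nonneg (hspan.level n p)) _

end IsOrthonormal

theorem IsThreeTerm.exists_mem_momentCone {P : ∀ n, Idx d n → MPoly d}
    {A : ∀ n : ℕ, Fin d → Matrix (Idx d n) (Idx d (n + 1)) ℝ}
    {B : ∀ n : ℕ, Fin d → Matrix (Idx d n) (Idx d n) ℝ} (h : IsThreeTerm P A B)
    (hspan : SpansPi P) {L : MPoly d →ₗ[ℝ] ℝ} (hL : IsOrthonormal L P)
    (hA : ∀ i, ∃ M, ∀ n, l2OpNorm (A n i) ≤ M) (hB : ∀ i, ∃ M, ∀ n, l2OpNorm (B n i) ≤ M) :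
    ∃ R, 0 < R ∧ L ∈ momentCone (Fin d) R := by
  choose M₁ hM₁ using hA
  choose M₂ hM₂ using hB
  obtain ⟨M, hM⟩ := Finite.exists_le fun i => max (M₁ i) (M₂ i)
  have hnonneg := hL.nonnegOnSquares hspan
  refine ⟨3 * max M 1, by positivity, momentCone.mem_of_abs_apply_X_mul_sq_le (by positivity)
    hnonneg fun i p => hL.abs_apply_X_mul_mul_self_le hspan (fun n => ?_) (fun n => ?_) p⟩
  · rw [h.jacobiBlock_succ_right]
    exact (hM₁ i n).trans ((le_max_left _ _).trans ((hM i).trans (le_max_left _ _)))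
  · rw [h.jacobiBlock_self]
    exact (hM₂ i n).trans ((le_max_right _ _).trans ((hM i).trans (le_max_left _ _)))

lemma isOrthonormal_integralFunctional_iff {P : ∀ n, Idx d n → MPoly d}
    {μ : Measure (Fin d → ℝ)} (hμ : ∀ p : MPoly d, Integrable (fun x => eval x p) μ) :
    IsOrthonormal (integralFunctional hμ) P ↔
      (∀ n (α β : Idx d n),
        ∫ x, eval x (P n α) * eval x (P n β) ∂μ = if α = β then 1 else 0) ∧
      ∀ n m : ℕ, n ≠ m → ∀ (α : Idx d n) (β : Idx d m),
        ∫ x, eval x (P n α) * eval x (P m β) ∂μ = 0 := by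
  simp only [← map_mul]
  exact ⟨fun h => ⟨h.self, h.of_ne⟩, fun h => ⟨h.1, h.2⟩⟩

end BoundedMultiplication

/-- Favard-type theorem with a determinate, compactly supported representing measure:
a degree-wise spanning sequence `{ℙ_n}` with `ℙ_0 = 1` is orthonormal with respect to some
determinate compactly supported `μ ∈ M(ℝ^d)` if and only if it satisfies the three-term
relation with symmetric `B_{n,i}`, the rank conditions, and the uniform spectral-norm bounds
`sup_k ‖A_{k,i}‖₂ < ∞`, `sup_k ‖B_{k,i}‖₂ < ∞`. -/
theorem favard_theorem_with_measure
    (P : ∀ n, Idx d n → MPoly d)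
    (hP0 : ∀ α : Idx d 0, P 0 α = 1)
    (hspan : SpansPi P) :
    (∃ μ : Measure (Fin d → ℝ),
      HasAllMoments μ ∧
      (∃ K : Set (Fin d → ℝ), IsCompact K ∧ μ Kᶜ = 0) ∧
      (∀ ν : Measure (Fin d → ℝ), HasAllMoments ν →
        (∀ α : Fin d → ℕ, ∫ x, ∏ i, x i ^ α i ∂ν = ∫ x, ∏ i, x i ^ α i ∂μ) → ν = μ) ∧
      (∀ n (α β : Idx d n),
        ∫ x, eval x (P n α) * eval x (P n β) ∂μ = if α = β then 1 else 0) ∧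
      (∀ n m : ℕ, n ≠ m → ∀ (α : Idx d n) (β : Idx d m),
        ∫ x, eval x (P n α) * eval x (P m β) ∂μ = 0)) ↔
    (∃ (A : ∀ n : ℕ, Fin d → Matrix (Idx d n) (Idx d (n+1)) ℝ)
       (B : ∀ n : ℕ, Fin d → Matrix (Idx d n) (Idx d n) ℝ),
      (∀ (n : ℕ) (i : Fin d), (B n i).IsSymm) ∧
      (∀ (i : Fin d) (α : Idx d 0), X i * P 0 α =
        (∑ β : Idx d 1, A 0 i α β • P 1 β) + ∑ β : Idx d 0, B 0 i α β • P 0 β) ∧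
      (∀ (n : ℕ) (i : Fin d) (α : Idx d (n+1)), X i * P (n+1) α =
        (∑ β : Idx d (n+2), A (n+1) i α β • P (n+2) β) +
        (∑ β : Idx d (n+1), B (n+1) i α β • P (n+1) β) +
        ∑ β : Idx d n, (A n i)ᵀ α β • P n β) ∧
      (∀ (n : ℕ) (i : Fin d), (A n i).rank = Fintype.card (Idx d n)) ∧
      (∀ n : ℕ,
        (Matrix.of fun (p : Fin d × Idx d n) (β : Idx d (n+1)) => A n p.1 p.2 β).rank =
          Fintype.card (Idx d (n+1))) ∧
      (∀ i : Fin d, ∃ M₁ : ℝ, ∀ k : ℕ, l2OpNorm (A k i) ≤ M₁) ∧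
      (∀ i : Fin d, ∃ M₂ : ℝ, ∀ k : ℕ, l2OpNorm (B k i) ≤ M₂)) := by
  constructor
  · rintro ⟨μ, hμ, ⟨K, hK, hμK⟩, -, hself, hne⟩
    obtain ⟨R, hR, hKR⟩ := exists_subset_cube hK
    have hcube : ∀ᵐ x ∂μ, x ∈ cube (Fin d) R := Filter.mem_of_superset (mem_ae_iff.2 hμK) hKR
    have hL := (isOrthonormal_integralFunctional_iff hμ.integrable_eval).2 ⟨hself, hne⟩
    have hnorm (i n m) : l2OpNorm (hspan.jacobiBlock i n m) ≤ R :=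
      hL.l2OpNorm_jacobiBlock_le hspan hR.le (integralFunctional_X_mul_mul_self_le _ hcube i) n m
    obtain ⟨hsymm, hzero, hsucc⟩ := isThreeTerm_iff.1 (hL.isThreeTerm hspan)
    exact ⟨fun n i => hspan.jacobiBlock i n (n + 1), fun n i => hspan.jacobiBlock i n n,
      hsymm, hzero, hsucc, hspan.rank_jacobiBlock, hspan.rank_stacked_jacobiBlock,
      fun i => ⟨R, fun k => hnorm i k (k + 1)⟩, fun i => ⟨R, fun k => hnorm i k k⟩⟩
  · rintro ⟨A, B, hsymm, hzero, hsucc, -, -, hA, hB⟩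
    have hthree : IsThreeTerm P A B := isThreeTerm_iff.2 ⟨hsymm, hzero, hsucc⟩
    obtain ⟨L, hL⟩ := hspan.exists_isOrthonormal (hthree.transpose_jacobiBlock hspan)
    obtain ⟨R, hR, hLR⟩ := hthree.exists_mem_momentCone hspan hL hA hB
    obtain ⟨μ, hfinite, hcube, hint⟩ := exists_measure_of_mem_momentCone hR hLR (hL.apply_one hP0)
    have hμ := hasAllMoments_of_ae_mem_cube hcube
    obtain rfl : integralFunctional hμ.integrable_eval = L := LinearMap.ext hint
    exact ⟨μ, hμ, ⟨_, isCompact_Icc, mem_ae_iff.1 hcube⟩, isDeterminate_of_ae_mem_cube hR.le hcube,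
      (isOrthonormal_integralFunctional_iff hμ.integrable_eval).1 hL⟩
end
end
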